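/- arXiv:1812.07473 — 2 statements merged into one kernel-verified Lean document; each statement's English description precedes it below -/
import Mathlib

section
/- For each d ∈ ℕ there is a constant c(d) > 0 such that for every F ∈ 𝔉_d^s and all k, n ∈ ℕ one has ρ(F^n, F^{n+2k}) ≤ c(d) · k · n^{−1}. -/
open MeasureTheory RealInnerProductSpace
open scoped ENNReal

noncomputable section

abbrev Euc (d : ℕ) := EuclideanSpace ℝ (Fin d)

/-- Convolution of two measures on an additive structure. -/
def mconv {α : Type*} [MeasurableSpace α] [Add α] (μ ν : Measure α) : Measure α :=
  (μ.prod ν).map (fun p => p.1 + p.2)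

/-- Convolution power `μ^{*n}`, with `μ^{*0}` the Dirac measure at `0`. -/
def convPow {α : Type*} [MeasurableSpace α] [AddMonoid α] (μ : Measure α) : ℕ → Measure α
  | 0 => Measure.dirac 0
  | n + 1 => mconv (convPow μ n) μ

/-- Convolution product of a finite family of measures. -/
def convProd {α : Type*} [MeasurableSpace α] [AddMonoid α] :
    ∀ {n : ℕ}, (Fin n → Measure α) → Measure α
  | 0, _ => Measure.dirac 0
  | n + 1, G => mconv (convProd (fun i : Fin n => G i.castSucc)) (G (Fin.last n))

/-- The compound Poisson measure `e(a·μ) = e^{-a} ∑_k a^k μ^{*k}/k!`. -/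
def cpois {α : Type*} [MeasurableSpace α] [AddMonoid α] (a : ℝ) (μ : Measure α) : Measure α :=
  Measure.sum fun k : ℕ =>
    (ENNReal.ofReal (Real.exp (-a) * a ^ k / k.factorial)) • convPow μ k

/-- A measure is symmetric if it is invariant under `x ↦ -x`. -/
def IsSymmMeasure {d : ℕ} (μ : Measure (Euc d)) : Prop :=
  μ.map (fun x => -x) = μ

/-- Characteristic function of a measure on `ℝ^d`. -/
def charFn {d : ℕ} (μ : Measure (Euc d)) (t : Euc d) : ℂ :=
  ∫ x, Complex.exp ((⟪t, x⟫ : ℂ) * Complex.I) ∂μ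

/-- Characteristic function of a measure on `ℝ`. -/
def charFn1 (μ : Measure ℝ) (t : ℝ) : ℂ :=
  ∫ x, Complex.exp (((t * x : ℝ) : ℂ) * Complex.I) ∂μ

/-- Convex polyhedra determined by the directions `t 1, …, t m`. -/
def polyhedraOn {d m : ℕ} (t : Fin m → Euc d) : Set (Set (Euc d)) :=
  {X | ∃ a b : Fin m → EReal,
    X = {x | ∀ j, a j ≤ ((⟪x, t j⟫ : ℝ) : EReal) ∧ ((⟪x, t j⟫ : ℝ) : EReal) ≤ b j}}

/-- The collection `𝔛_m` of convex polyhedra determined by `m` pairs of parallel hyperplanes. -/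
def polyhedra (d m : ℕ) : Set (Set (Euc d)) :=
  {X | ∃ t : Fin m → Euc d, X ∈ polyhedraOn t}

/-- The distance `ρ_m(G,H) = sup_{X ∈ 𝔛_m} |G{X} - H{X}|`. -/
def rhoPoly {d : ℕ} (m : ℕ) (G H : Measure (Euc d)) : ℝ :=
  ⨆ X ∈ polyhedra d m, |(G X).toReal - (H X).toReal|

/-- The Lévy concentration function `Q(μ, b) = sup_x μ[x, x+b]`. -/
def concFn (μ : Measure ℝ) (b : ℝ) : ℝ :=
  ⨆ x : ℝ, (μ (Set.Icc x (x + b))).toReal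

/-- `q(H, X) = inf_{‖t‖=1} Q(𝓛(⟨ξ,t⟩), λ{⟨x,t⟩ : x ∈ X})` where `H = 𝓛(ξ)`. -/
def qFn {d : ℕ} (H : Measure (Euc d)) (X : Set (Euc d)) : ℝ :=
  ⨅ t ∈ {t : Euc d | ‖t‖ = 1},
    concFn (H.map fun x => ⟪x, t⟫) (volume ((fun x => ⟪x, t⟫) '' X)).toReal

/-- The uniform (Kolmogorov) distance on `ℝ^d`. -/
def kolmDist {d : ℕ} (G H : Measure (Euc d)) : ℝ :=
  ⨆ x : Euc d, |(G {y | ∀ i, y i ≤ x i}).toReal - (H {y | ∀ i, y i ≤ x i}).toReal|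

/-- The uniform (Kolmogorov) distance on `ℝ`. -/
def kolmDist1 (G H : Measure ℝ) : ℝ :=
  ⨆ x : ℝ, |(G (Set.Iic x)).toReal - (H (Set.Iic x)).toReal|

end

/-!
Let `a` be a family of `2 * n` independent vectors with symmetric law `F`. For sets `S` and `T` of
indices, `∑_S a - ∑_T a` has law `F ^ |S ∆ T|`, so that averaging the indicator of
`∑_S a ≤ ∑_T a + x` gives the value `u |S ∆ T|`, where `u m` is the distribution function of `F ^ m`
at `x`. If `φ` is the signed edge boundary of the middle layer of the discrete cube, then
`∑_S φ(S) u |S| = (2n choose n) n (u (n - 1) - u (n + 1))`. It therefore suffices to bound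
`∑_{S,T} φ(S ∆ T) 1[∑_S a ≤ ∑_T a + x]` by a multiple of `4 ^ n (2n choose n)` for fixed `a`.

The kernel `φ(S ∆ T)` is diagonal in the Walsh basis. Its eigenvalues are of order
`(2n choose n)` at the characters of degree `1` and `2n - 1`, and smaller by a factor `n` elsewhere.
Since the degree one part of an indicator function is small (a fourth moment estimate), the sums of
the kernel over rectangles `A × B` gain a factor `(|A| / 4 ^ n) ^ (1 / 6)`. Thanks to this gain,
imposing the inequality in one coordinate, by repeatedly splitting `A` at a median, only costs a
geometric series.
-/

open scoped Finset symmDiff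

/-! ### Threshold kernels -/

section Median

variable {X L : Type*} [LinearOrder L]

theorem exists_median {A : Finset X} (hA : A.Nonempty) (p : X → L) :
    ∃ a ∈ A, 2 * #{x ∈ A | p x < p a} ≤ #A ∧ 2 * #{x ∈ A | p a < p x} ≤ #A := by
  obtain ⟨top, htop, hmax⟩ := A.exists_max_image p hA
  have hne : {a ∈ A | #A ≤ 2 * #{x ∈ A | p x ≤ p a}}.Nonempty := by
    refine ⟨top, Finset.mem_filter.2 ⟨htop, ?_⟩⟩
    rw [Finset.filter_true_of_mem hmax]
    lia
  obtain ⟨a, ha, hmin⟩ := Finset.exists_min_image _ p hne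
  obtain ⟨haA, ha_half⟩ := Finset.mem_filter.1 ha
  refine ⟨a, haA, ?_, ?_⟩
  · by_contra! hlt
    obtain ⟨b, hb, hbmax⟩ := Finset.exists_max_image {x ∈ A | p x < p a} p
      (Finset.card_pos.1 (by lia))
    obtain ⟨hbA, hba⟩ := Finset.mem_filter.1 hb
    refine (hmin b (Finset.mem_filter.2 ⟨hbA, hlt.le.trans ?_⟩)).not_gt hba
    gcongr with x hx
    exact fun hxa => hbmax x (Finset.mem_filter.2 ⟨hx, hxa⟩)
  · have hsplit := Finset.card_filter_add_card_filter_not (s := A) (fun x => p x ≤ p a)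
    simp only [not_le] at hsplit
    lia

end Median

theorem sqrt_mul_sqrt_add_le {a₁ a₂ b₁ b₂ : ℝ} (ha₁ : 0 ≤ a₁) (ha₂ : 0 ≤ a₂) (hb₁ : 0 ≤ b₁)
    (hb₂ : 0 ≤ b₂) : √a₁ * √b₁ + √a₂ * √b₂ ≤ √(a₁ + a₂) * √(b₁ + b₂) := by
  simpa using Real.sum_sqrt_mul_sqrt_le (ι := Fin 2) Finset.univ (f := ![a₁, a₂]) (g := ![b₁, b₂])
    (by simp [Fin.forall_fin_two, *]) (by simp [Fin.forall_fin_two, *])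

theorem rpow_le_two_rpow_neg_mul_rpow {a b e : ℝ} (ha : 0 ≤ a) (he : 0 ≤ e) (h : 2 * a ≤ b) :
    a ^ e ≤ 2 ^ (-e) * b ^ e := by
  have hb : 0 ≤ b := (mul_nonneg zero_le_two ha).trans h
  rw [Real.rpow_neg zero_le_two, ← Real.inv_rpow zero_le_two, ← Real.mul_rpow (by positivity) hb]
  gcongr
  linarith

section Rectangle

variable {X Y : Type*}

/-- The discrepancy condition on a kernel `Φ`: its sums over combinatorial rectangles beat the
bound of operator norm type `√|A| * √|B|` by a power of the number of rows. -/
def RectangleBound (Φ : X → Y → ℝ) (C e : ℝ) : Prop :=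
  ∀ (A : Finset X) (B : Finset Y),
    |∑ s ∈ A, ∑ t ∈ B, Φ s t| ≤ C * (#A : ℝ) ^ e * (√(#A : ℝ) * √(#B : ℝ))

variable {L : Type*} [LinearOrder L]

theorem sum_sum_threshold_eq (Φ : X → Y → ℝ) (p : X → L) (q : Y → L) (c : L)
    (A : Finset X) (B : Finset Y) :
    ∑ s ∈ A, ∑ t ∈ B, (if p s ≤ q t then Φ s t else 0) =
      ∑ s ∈ A with p s < c, ∑ t ∈ B with q t < c, (if p s ≤ q t then Φ s t else 0) +
      ∑ s ∈ A with c < p s, ∑ t ∈ B with ¬ q t < c, (if p s ≤ q t then Φ s t else 0) +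
      ∑ s ∈ A with p s ≤ c, ∑ t ∈ B with ¬ q t < c, Φ s t := by
  have push (P : Prop) [Decidable P] (f : Y → ℝ) :
      (if P then ∑ t ∈ B, f t else 0) = ∑ t ∈ B, if P then f t else 0 := by
    split_ifs <;> simp
  simp only [Finset.sum_filter, push, ← Finset.sum_add_distrib]
  refine Finset.sum_congr rfl fun s _ => Finset.sum_congr rfl fun t _ => ?_
  grind

theorem abs_sum_sum_threshold_le {Φ : X → Y → ℝ} {p : X → L} {q : Y → L} {c : L} {A : Finset X}
    {B : Finset Y} {D E : ℝ} (hD : 0 ≤ D)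
    (hlow : |∑ s ∈ A with p s < c, ∑ t ∈ B with q t < c, if p s ≤ q t then Φ s t else 0| ≤
      D * (√(#{s ∈ A | p s < c} : ℝ) * √(#{t ∈ B | q t < c} : ℝ)))
    (hhigh : |∑ s ∈ A with c < p s, ∑ t ∈ B with ¬ q t < c, if p s ≤ q t then Φ s t else 0| ≤
      D * (√(#{s ∈ A | c < p s} : ℝ) * √(#{t ∈ B | ¬ q t < c} : ℝ)))
    (hcross : |∑ s ∈ A with p s ≤ c, ∑ t ∈ B with ¬ q t < c, Φ s t| ≤
      E * (√(#A : ℝ) * √(#B : ℝ))) :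
    |∑ s ∈ A, ∑ t ∈ B, if p s ≤ q t then Φ s t else 0| ≤ (D + E) * (√(#A : ℝ) * √(#B : ℝ)) := by
  have hA : (#{s ∈ A | p s < c} : ℝ) + #{s ∈ A | c < p s} ≤ #A := by
    rw [← Nat.cast_add, ← Finset.card_filter_add_card_filter_not (s := A) fun s => p s < c]
    gcongr with s
    exact fun h => h.not_gt
  have hB : (#{t ∈ B | q t < c} : ℝ) + #{t ∈ B | ¬ q t < c} = #B := by
    exact_mod_cast B.card_filter_add_card_filter_not fun t => q t < c
  have hdiag : √(#{s ∈ A | p s < c} : ℝ) * √(#{t ∈ B | q t < c} : ℝ) +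
      √(#{s ∈ A | c < p s} : ℝ) * √(#{t ∈ B | ¬ q t < c} : ℝ) ≤ √(#A : ℝ) * √(#B : ℝ) := by
    refine (sqrt_mul_sqrt_add_le ?_ ?_ ?_ ?_).trans ?_ <;> try positivity
    rw [hB]
    gcongr
  rw [sum_sum_threshold_eq Φ p q c]
  refine (abs_add_three _ _ _).trans ((add_le_add_three hlow hhigh hcross).trans ?_)
  rw [← mul_add, add_mul]
  gcongr

namespace RectangleBound

variable {Φ : X → Y → ℝ} {C e : ℝ}

/- Splitting `A` at a median of `p` leaves one full rectangle and two threshold sums over at most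
half of `A` each, so the constant `D` of the threshold kernel satisfies `D = D * 2 ^ (-e) + C`. -/
theorem threshold (hΦ : RectangleBound Φ C e) (hC : 0 ≤ C) (he : 0 < e) (p : X → L) (q : Y → L) :
    RectangleBound (fun s t => if p s ≤ q t then Φ s t else 0) (C / (1 - 2 ^ (-e))) e := by
  have hpow : (2 : ℝ) ^ (-e) < 1 := Real.rpow_lt_one_of_one_lt_of_neg one_lt_two (neg_neg_of_pos he)
  set D := C / (1 - 2 ^ (-e)) with hD_def
  have hD : 0 ≤ D := div_nonneg hC (sub_nonneg.2 hpow.le)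
  have hD_eq : D * 2 ^ (-e) + C = D := by
    rw [hD_def]
    field_simp [(sub_pos.2 hpow).ne']
    ring
  intro A
  induction A using Finset.strongInduction with
  | H A ih =>
  intro B
  obtain rfl | hA := A.eq_empty_or_nonempty
  · simp
  obtain ⟨m, hm, hlow, hhigh⟩ := exists_median hA p
  have half {A' : Finset X} (hA' : A' ⊆ A) (hmA' : m ∉ A') (hcard : 2 * #A' ≤ #A) (B' : Finset Y) :
      |∑ s ∈ A', ∑ t ∈ B', if p s ≤ q t then Φ s t else 0| ≤
        D * 2 ^ (-e) * (#A : ℝ) ^ e * (√(#A' : ℝ) * √(#B' : ℝ)) := by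
    refine (ih A' (hA'.ssubset_of_ne fun h => hmA' (h ▸ hm)) B').trans ?_
    have hpow_card : (#A' : ℝ) ^ e ≤ 2 ^ (-e) * (#A : ℝ) ^ e :=
      rpow_le_two_rpow_neg_mul_rpow (by positivity) he.le (by exact_mod_cast hcard)
    rw [mul_assoc D (2 ^ (-e))]
    gcongr
  rw [← hD_eq, add_mul]
  refine abs_sum_sum_threshold_le (c := p m) (by positivity)
    (half (Finset.filter_subset _ _) (by simp) hlow _)
    (half (Finset.filter_subset _ _) (by simp) hhigh _) ((hΦ _ _).trans ?_)
  gcongr <;> exact Finset.filter_subset _ _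

theorem thresholds {κ : Type*} (hΦ : RectangleBound Φ C e) (hC : 0 ≤ C) (he : 0 < e)
    (p : κ → X → L) (q : κ → Y → L) (S : Finset κ) :
    RectangleBound (fun s t => if ∀ i ∈ S, p i s ≤ q i t then Φ s t else 0)
      (C / (1 - 2 ^ (-e)) ^ #S) e := by
  have hpow : 0 < 1 - (2 : ℝ) ^ (-e) :=
    sub_pos.2 (Real.rpow_lt_one_of_one_lt_of_neg one_lt_two (neg_neg_of_pos he))
  induction S using Finset.cons_induction with
  | empty => simpa using hΦ
  | cons i S hi ih =>
    have hstep := ih.threshold (by positivity) he (p i) (q i)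
    simpa only [Finset.forall_mem_cons, ite_and, Finset.card_cons, pow_succ, ← div_div] using hstep

end RectangleBound

end Rectangle

/-! ### Walsh functions on the discrete cube -/

section Walsh

variable {ι : Type*} [DecidableEq ι]

/-- The Walsh character indexed by `T`, evaluated at `S`, on the discrete cube encoded as
`Finset ι`; the group law of the cube is `∆`. -/
noncomputable def walsh (T S : Finset ι) : ℝ := (-1) ^ #(T ∩ S)

theorem walsh_comm (T S : Finset ι) : walsh T S = walsh S T := by
  rw [walsh, walsh, Finset.inter_comm]

theorem walsh_eq_prod (T S : Finset ι) : walsh T S = ∏ i ∈ T, if i ∈ S then -1 else 1 := by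
  rw [walsh, Finset.prod_ite_mem, Finset.prod_const]

theorem walsh_singleton (i : ι) (S : Finset ι) : walsh {i} S = if i ∈ S then -1 else 1 := by
  rw [walsh_eq_prod, Finset.prod_singleton]

theorem walsh_empty (S : Finset ι) : walsh ∅ S = 1 := by
  rw [walsh_eq_prod, Finset.prod_empty]

theorem abs_walsh (T S : Finset ι) : |walsh T S| = 1 :=
  abs_neg_one_pow _

theorem walsh_mul_self (T S : Finset ι) : walsh T S * walsh T S = 1 := by
  rw [← abs_mul_abs_self, abs_walsh, mul_one]

theorem walsh_symmDiff_right (T S S' : Finset ι) : walsh T (S ∆ S') = walsh T S * walsh T S' := by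
  simp only [walsh_eq_prod, ← Finset.prod_mul_distrib, Finset.mem_symmDiff]
  refine Finset.prod_congr rfl fun i _ => ?_
  by_cases hS : i ∈ S <;> by_cases hS' : i ∈ S' <;> simp [hS, hS']

theorem walsh_symmDiff_left (T T' S : Finset ι) : walsh (T ∆ T') S = walsh T S * walsh T' S := by
  simp only [walsh_comm _ S, walsh_symmDiff_right]

open scoped Pointwise in
theorem walsh_smul_smul (g : Equiv.Perm ι) (T S : Finset ι) :
    walsh (g • T) (g • S) = walsh T S := by
  rw [walsh, walsh, ← Finset.smul_finset_inter, Finset.card_smul_finset]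

theorem card_symmDiff_singleton_of_mem {i : ι} {S : Finset ι} (hi : i ∈ S) :
    #(S ∆ {i}) = #S - 1 := by
  rw [symmDiff_of_ge (Finset.singleton_subset_iff.2 hi), Finset.sdiff_singleton_eq_erase,
    Finset.card_erase_of_mem hi]

theorem card_symmDiff_singleton_of_notMem {i : ι} {S : Finset ι} (hi : i ∉ S) :
    #(S ∆ {i}) = #S + 1 := by
  rw [(Finset.disjoint_singleton_right.2 hi).symmDiff_eq_sup, Finset.sup_eq_union,
    Finset.union_comm, ← Finset.insert_eq, Finset.card_insert_of_notMem hi]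

variable [Fintype ι]

theorem walsh_compl_left (T S : Finset ι) : walsh Tᶜ S = (-1) ^ #S * walsh T S := by
  rw [← hnot_eq_compl, ← top_symmDiff, walsh_symmDiff_left, walsh, Finset.top_eq_univ,
    Finset.univ_inter]

theorem sum_walsh_singleton (S : Finset ι) : ∑ i, walsh {i} S = Fintype.card ι - 2 * #S := by
  have h (i : ι) : walsh {i} S = 1 - 2 * if i ∈ S then 1 else 0 := by
    rw [walsh_singleton]
    split_ifs <;> norm_num
  simp [h, mul_comm]

/-- The Walsh–Fourier transform on the discrete cube, without the factor `2 ^ (-|ι|)`. -/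
noncomputable def walshTransform (f : Finset ι → ℝ) (T : Finset ι) : ℝ := ∑ S, f S * walsh T S

theorem sum_walsh_mul_walsh (S S' : Finset ι) :
    ∑ T, walsh T S * walsh T S' = if S = S' then (2 : ℝ) ^ Fintype.card ι else 0 := by
  have hprod : ∏ i, (1 + if i ∈ S ∆ S' then (-1 : ℝ) else 1) = ∑ T, walsh T (S ∆ S') := by
    simp only [Finset.prod_one_add, Finset.powerset_univ, walsh_eq_prod]
  simp only [← walsh_symmDiff_right, ← hprod]
  split_ifs with h
  · simp [h, one_add_one_eq_two]
  · obtain ⟨i, hi⟩ := Finset.nonempty_iff_ne_empty.2 (symmDiff_eq_bot.not.2 h)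
    exact Finset.prod_eq_zero (Finset.mem_univ i) (by simp [hi])

theorem sum_walshTransform_mul_walsh (f : Finset ι → ℝ) (S : Finset ι) :
    ∑ T, walshTransform f T * walsh T S = 2 ^ Fintype.card ι * f S := by
  simp only [walshTransform, Finset.sum_mul, mul_assoc]
  rw [Finset.sum_comm]
  simp [← Finset.mul_sum, sum_walsh_mul_walsh, mul_comm]

theorem sum_sq_sum_walsh {κ : Type*} (J : Finset κ) {f : κ → Finset ι} (hf : f.Injective)
    (c : κ → ℝ) :
    ∑ S, (∑ j ∈ J, c j * walsh (f j) S) ^ 2 = 2 ^ Fintype.card ι * ∑ j ∈ J, c j ^ 2 := by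
  classical
  have orth (j k : κ) : ∑ S, walsh (f j) S * walsh (f k) S =
      if j = k then (2 : ℝ) ^ Fintype.card ι else 0 := by
    simpa only [walsh_comm (f _), hf.eq_iff] using sum_walsh_mul_walsh (f j) (f k)
  simp only [sq, Finset.sum_mul_sum, mul_mul_mul_comm (c _)]
  rw [Finset.sum_comm]
  simp only [Finset.sum_comm (s := Finset.univ), ← Finset.mul_sum, orth]
  simp +contextual [Finset.mul_sum, mul_comm]

theorem sum_walsh_singleton_mul_eq_zero (i : ι) {g : Finset ι → ℝ}
    (hg : ∀ S, g (S ∆ {i}) = g S) : ∑ S, walsh {i} S * g S = 0 := by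
  have hflip : ∑ S, walsh {i} S * g S = ∑ S, -(walsh {i} S * g S) := by
    rw [← (symmDiff_left_involutive ({i} : Finset ι)).bijective.sum_comp]
    simp only [walsh_symmDiff_right, hg, walsh_singleton i {i}, Finset.mem_singleton, if_true,
      mul_neg_one, neg_mul]
  rw [Finset.sum_neg_distrib] at hflip
  linarith

theorem sum_pow_four_sum_walsh_singleton_le (J : Finset ι) (w : ι → ℝ) :
    ∑ S, (∑ i ∈ J, w i * walsh {i} S) ^ 4 ≤
      2 ^ Fintype.card ι * (3 * (∑ i ∈ J, w i ^ 2) ^ 2) := by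
  induction J using Finset.cons_induction with
  | empty => simp
  | cons i J hi ih =>
    set Y : Finset ι → ℝ := fun S => ∑ j ∈ J, w j * walsh {j} S with hY_def
    have hY (S : Finset ι) : Y (S ∆ {i}) = Y S := by
      refine Finset.sum_congr rfl fun j hj => ?_
      simp [walsh_symmDiff_right, walsh_singleton j {i}, ne_of_mem_of_not_mem hj hi]
    have hodd (m : ℕ) : ∑ S, walsh {i} S * Y S ^ m = 0 :=
      sum_walsh_singleton_mul_eq_zero i fun S => by rw [hY]
    have hsq : ∑ S, Y S ^ 2 = 2 ^ Fintype.card ι * ∑ j ∈ J, w j ^ 2 :=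
      sum_sq_sum_walsh J Finset.singleton_injective w
    have hexpand (S : Finset ι) : (w i * walsh {i} S + Y S) ^ 4 =
        w i ^ 4 + 4 * w i ^ 3 * (walsh {i} S * Y S ^ 1) + 6 * w i ^ 2 * Y S ^ 2 +
          4 * w i * (walsh {i} S * Y S ^ 3) + Y S ^ 4 := by
      linear_combination (w i ^ 4 * (walsh {i} S ^ 2 + 1) + 4 * w i ^ 3 * walsh {i} S * Y S +
        6 * w i ^ 2 * Y S ^ 2) * walsh_mul_self {i} S
    calc ∑ S, (∑ j ∈ J.cons i hi, w j * walsh {j} S) ^ 4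
        = ∑ S, (w i * walsh {i} S + Y S) ^ 4 := by simp only [Finset.sum_cons, hY_def]
      _ = 2 ^ Fintype.card ι * (w i ^ 4 + 6 * w i ^ 2 * ∑ j ∈ J, w j ^ 2) + ∑ S, Y S ^ 4 := by
        simp only [hexpand, Finset.sum_add_distrib, ← Finset.mul_sum, hodd, hsq]
        simp
        ring
      _ ≤ 2 ^ Fintype.card ι * (w i ^ 4 + 6 * w i ^ 2 * ∑ j ∈ J, w j ^ 2) +
          2 ^ Fintype.card ι * (3 * (∑ j ∈ J, w j ^ 2) ^ 2) := by gcongr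
      _ ≤ 2 ^ Fintype.card ι * (3 * (w i ^ 2 + ∑ j ∈ J, w j ^ 2) ^ 2) := by
        rw [← mul_add]
        gcongr
        nlinarith [sq_nonneg (w i ^ 2)]
      _ = _ := by rw [Finset.sum_cons]

theorem sq_sum_sq_sum_walsh_symmDiff_singleton_le (A : Finset (Finset ι)) (R : Finset ι) :
    (∑ i, (∑ S ∈ A, walsh (R ∆ {i}) S) ^ 2) ^ 2 ≤ 3 * 2 ^ Fintype.card ι * (#A : ℝ) ^ 3 := by
  set a : ι → ℝ := fun i => ∑ S ∈ A, walsh (R ∆ {i}) S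
  set Y : Finset ι → ℝ := fun S => ∑ i, a i * walsh {i} S
  set W := ∑ i, a i ^ 2
  have hW : W = ∑ S ∈ A, walsh R S * Y S := by
    simp only [W, Y, Finset.mul_sum]
    rw [Finset.sum_comm]
    refine Finset.sum_congr rfl fun i _ => ?_
    rw [sq, Finset.mul_sum]
    exact Finset.sum_congr rfl fun S _ => by rw [walsh_symmDiff_left]; ring
  have hW_sq : W ^ 2 ≤ #A * ∑ S ∈ A, Y S ^ 2 := by
    rw [hW]
    refine sq_sum_le_card_mul_sum_sq.trans_eq ?_
    simp [mul_pow, sq (walsh _ _), walsh_mul_self]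
  have hY_sq : (∑ S ∈ A, Y S ^ 2) ^ 2 ≤ #A * (2 ^ Fintype.card ι * (3 * W ^ 2)) := by
    refine sq_sum_le_card_mul_sum_sq.trans ?_
    simp only [← pow_mul, Nat.reduceMul]
    gcongr
    exact (Finset.sum_le_univ_sum_of_nonneg fun S => by positivity).trans
      (sum_pow_four_sum_walsh_singleton_le _ _)
  obtain hW_zero | hW_pos := (sq_nonneg W).eq_or_lt'
  · rw [hW_zero]
    positivity
  · refine le_of_mul_le_mul_right ?_ hW_pos
    calc W ^ 2 * W ^ 2 = (W ^ 2) ^ 2 := (sq _).symm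
      _ ≤ (#A * ∑ S ∈ A, Y S ^ 2) ^ 2 := by gcongr
      _ = (#A : ℝ) ^ 2 * (∑ S ∈ A, Y S ^ 2) ^ 2 := mul_pow _ _ _
      _ ≤ (#A : ℝ) ^ 2 * (#A * (2 ^ Fintype.card ι * (3 * W ^ 2))) := by gcongr
      _ = 3 * 2 ^ Fintype.card ι * (#A : ℝ) ^ 3 * W ^ 2 := by ring

end Walsh

/-! ### The boundary of the middle layer -/

section Layer

variable {ι : Type*} [Fintype ι] [DecidableEq ι] {n : ℕ}

/-- The Krawtchouk polynomial of degree `n`, the Walsh transform of the indicator of the layer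
`#S = n`; it is a function of `T` here, although it only depends on `#T`. -/
noncomputable def krawtchouk (n : ℕ) (T : Finset ι) : ℝ := ∑ S with #S = n, walsh T S

theorem krawtchouk_empty : krawtchouk n (∅ : Finset ι) = (Fintype.card ι).choose n := by
  simp only [krawtchouk, walsh_empty, Finset.sum_const, nsmul_one,
    Finset.univ_filter_card_eq, Finset.card_powersetCard, Finset.card_univ]

theorem krawtchouk_compl (T : Finset ι) : krawtchouk n Tᶜ = (-1) ^ n * krawtchouk n T := by
  rw [krawtchouk, krawtchouk, Finset.mul_sum]
  refine Finset.sum_congr rfl fun S hS => ?_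
  rw [walsh_compl_left, (Finset.mem_filter.1 hS).2]

open scoped Pointwise in
theorem krawtchouk_congr {T T' : Finset ι} (h : #T = #T') : krawtchouk n T = krawtchouk n T' := by
  obtain ⟨g, hg⟩ :=
    (Set.powersetCard.isPretransitive (α := ι) (n := #T')).exists_smul_eq ⟨T, h⟩ ⟨T', rfl⟩
  obtain rfl : g • T = T' := congrArg Subtype.val hg
  refine Finset.sum_bijective (g • ·) (MulAction.bijective g) (fun S => ?_) fun S _ => ?_
  · simp [Finset.card_smul_finset]
  · exact (walsh_smul_smul g T S).symm

theorem sum_krawtchouk_symmDiff_singleton (hn : Fintype.card ι = 2 * n) (T : Finset ι) :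
    ∑ i, krawtchouk n (T ∆ {i}) = 0 := by
  simp only [krawtchouk]
  rw [Finset.sum_comm]
  refine Finset.sum_eq_zero fun S hS => ?_
  simp only [walsh_symmDiff_left, ← Finset.mul_sum, sum_walsh_singleton,
    (Finset.mem_filter.1 hS).2, hn]
  simp

/-- The signed edge boundary of the layer `#S = n`. When `|ι| = 2 * n`, it equals `n + 1` on the
layer `n - 1`, `-(n + 1)` on the layer `n + 1` and vanishes elsewhere, so that pairing it with a
function of `#S` gives the difference of its values at `n - 1` and `n + 1`. -/
noncomputable def layerBoundary (n : ℕ) (S : Finset ι) : ℝ :=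
  -∑ i, if #(S ∆ {i}) = n then walsh {i} (S ∆ {i}) else 0

theorem abs_layerBoundary_le (n : ℕ) (S : Finset ι) : |layerBoundary n S| ≤ Fintype.card ι := by
  rw [layerBoundary, abs_neg]
  refine (Finset.abs_sum_le_sum_abs _ _).trans
    ((Finset.sum_le_card_nsmul _ _ 1 fun i _ => ?_).trans_eq ?_)
  · split_ifs <;> simp [abs_walsh]
  · simp

theorem sum_layerBoundary_mul (n : ℕ) (g : Finset ι → ℝ) :
    ∑ S, layerBoundary n S * g S = -∑ S with #S = n, ∑ i, walsh {i} S * g (S ∆ {i}) := by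
  simp only [layerBoundary, neg_mul, Finset.sum_neg_distrib, Finset.sum_mul]
  rw [Finset.sum_comm, Finset.sum_comm (t := Finset.univ (α := ι))]
  refine congrArg Neg.neg (Finset.sum_congr rfl fun i _ => ?_)
  rw [← (symmDiff_left_involutive ({i} : Finset ι)).bijective.sum_comp, Finset.sum_filter]
  simp only [symmDiff_symmDiff_cancel_right, ite_mul, zero_mul]

theorem sum_layerBoundary_mul_card (hn : Fintype.card ι = 2 * n) (u : ℕ → ℝ) :
    ∑ S : Finset ι, layerBoundary n S * u #S = n.centralBinom * (n * (u (n - 1) - u (n + 1))) := by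
  have inner (S : Finset ι) (hS : #S = n) :
      ∑ i, walsh {i} S * u #(S ∆ {i}) = n * (u (n + 1) - u (n - 1)) := by
    have hmem (i : ι) (hi : i ∈ S) : walsh {i} S * u #(S ∆ {i}) = -u (n - 1) := by
      rw [walsh_singleton, if_pos hi, card_symmDiff_singleton_of_mem hi, hS, neg_one_mul]
    have hnotMem (i : ι) (hi : i ∈ Sᶜ) : walsh {i} S * u #(S ∆ {i}) = u (n + 1) := by
      rw [Finset.mem_compl] at hi
      rw [walsh_singleton, if_neg hi, card_symmDiff_singleton_of_notMem hi, hS, one_mul]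
    have hcompl : #Sᶜ = n := by rw [Finset.card_compl, hS]; lia
    rw [← Finset.sum_add_sum_compl S, Finset.sum_congr rfl hmem, Finset.sum_congr rfl hnotMem,
      Finset.sum_const, Finset.sum_const, hS, hcompl, nsmul_eq_mul, nsmul_eq_mul]
    ring
  rw [sum_layerBoundary_mul, Finset.sum_congr rfl fun S hS => inner S (Finset.mem_filter.1 hS).2,
    Finset.sum_const, Finset.univ_filter_card_eq, Finset.card_powersetCard, Finset.card_univ, hn,
    ← Nat.centralBinom_eq_two_mul_choose, nsmul_eq_mul]
  ring

theorem walshTransform_layerBoundary_eq_mem (hn : Fintype.card ι = 2 * n) (T : Finset ι) :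
    walshTransform (layerBoundary n) T = 2 * ∑ i ∈ T, krawtchouk n (T ∆ {i}) := by
  have hsign (i : ι) : walsh T {i} * krawtchouk n (T ∆ {i}) =
      krawtchouk n (T ∆ {i}) - 2 * if i ∈ T then krawtchouk n (T ∆ {i}) else 0 := by
    rw [walsh_comm, walsh_singleton]
    split_ifs <;> ring
  calc walshTransform (layerBoundary n) T
      = -∑ S with #S = n, ∑ i, walsh {i} S * walsh T (S ∆ {i}) := sum_layerBoundary_mul n _
    _ = -∑ i, walsh T {i} * krawtchouk n (T ∆ {i}) := by
      rw [Finset.sum_comm]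
      simp only [krawtchouk, Finset.mul_sum, walsh_symmDiff_left, walsh_symmDiff_right]
      simp only [mul_comm, mul_left_comm]
    _ = 2 * ∑ i ∈ T, krawtchouk n (T ∆ {i}) := by
      simp only [hsign, Finset.sum_sub_distrib, ← Finset.mul_sum, Finset.sum_ite_mem,
        Finset.univ_inter, sum_krawtchouk_symmDiff_singleton hn]
      ring

theorem walshTransform_layerBoundary_eq_notMem (hn : Fintype.card ι = 2 * n) (T : Finset ι) :
    walshTransform (layerBoundary n) T = -2 * ∑ i ∈ Tᶜ, krawtchouk n (T ∆ {i}) := by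
  have hsplit := Finset.sum_add_sum_compl T fun i => krawtchouk n (T ∆ {i})
  rw [sum_krawtchouk_symmDiff_singleton hn] at hsplit
  rw [walshTransform_layerBoundary_eq_mem hn]
  linear_combination 2 * hsplit

theorem walshTransform_layerBoundary_eq_of_card_add_one (hn : Fintype.card ι = 2 * n)
    {T U : Finset ι} (h : #U + 1 = #T) :
    walshTransform (layerBoundary n) T = 2 * #T * krawtchouk n U := by
  have hU (i : ι) (hi : i ∈ T) : krawtchouk n (T ∆ {i}) = krawtchouk n U :=
    krawtchouk_congr (by rw [card_symmDiff_singleton_of_mem hi, ← h, Nat.add_sub_cancel])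
  rw [walshTransform_layerBoundary_eq_mem hn, Finset.sum_congr rfl hU]
  simp [mul_assoc]

theorem walshTransform_layerBoundary_eq_of_card_eq_add_one (hn : Fintype.card ι = 2 * n)
    {T U : Finset ι} (h : #U = #T + 1) :
    walshTransform (layerBoundary n) T = -2 * (2 * n - #T) * krawtchouk n U := by
  have hU (i : ι) (hi : i ∈ Tᶜ) : krawtchouk n (T ∆ {i}) = krawtchouk n U :=
    krawtchouk_congr (by rw [h, card_symmDiff_singleton_of_notMem (Finset.mem_compl.1 hi)])
  rw [walshTransform_layerBoundary_eq_notMem hn, Finset.sum_congr rfl hU]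
  have hcard : (#Tᶜ : ℝ) = 2 * n - #T := by
    rw [Finset.card_compl, Nat.cast_sub T.card_le_univ, hn]
    simp
  simp [mul_assoc, hcard]

theorem abs_walshTransform_layerBoundary_compl (hn : Fintype.card ι = 2 * n) (T : Finset ι) :
    |walshTransform (layerBoundary n) Tᶜ| = |walshTransform (layerBoundary n) T| := by
  have hcompl (i : ι) : Tᶜ ∆ {i} = (T ∆ {i})ᶜ := by
    rw [← hnot_eq_compl, ← hnot_eq_compl, ← top_symmDiff, ← top_symmDiff, symmDiff_assoc]
  rw [walshTransform_layerBoundary_eq_mem hn, walshTransform_layerBoundary_eq_notMem hn]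
  simp only [hcompl, krawtchouk_compl, ← Finset.mul_sum, abs_mul, abs_neg, abs_neg_one_pow, one_mul]

theorem abs_walshTransform_layerBoundary_of_card_eq_one (hn : Fintype.card ι = 2 * n)
    {T : Finset ι} (hT : #T = 1) :
    |walshTransform (layerBoundary n) T| = 2 * n.centralBinom := by
  rw [walshTransform_layerBoundary_eq_of_card_add_one hn (U := ∅) (by simp [hT]),
    krawtchouk_empty, hn, hT, ← Nat.centralBinom_eq_two_mul_choose]
  simp

theorem mul_abs_walshTransform_layerBoundary_of_card_eq_add_two (hn : Fintype.card ι = 2 * n)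
    {T T' : Finset ι} (h : #T' = #T + 2) :
    (2 * n - #T) * |walshTransform (layerBoundary n) T'| =
      (#T + 2) * |walshTransform (layerBoundary n) T| := by
  obtain ⟨U, -, hU⟩ := Finset.exists_subset_card_eq (s := T') (n := #T + 1) (by lia)
  have hT : (#T : ℝ) ≤ 2 * n := by exact_mod_cast hn ▸ T.card_le_univ
  rw [walshTransform_layerBoundary_eq_of_card_add_one hn (T := T') (U := U) (by lia),
    walshTransform_layerBoundary_eq_of_card_eq_add_one hn hU, h]
  simp only [abs_mul, abs_neg, Nat.abs_cast, abs_of_nonneg (sub_nonneg.2 hT)]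
  push_cast
  ring

theorem mul_abs_walshTransform_layerBoundary_le_of_le (hn : Fintype.card ι = 2 * n) {T : Finset ι}
    (hT : #T ≤ n + 1) (hT_one : #T ≠ 1) :
    (2 * n - 1) * |walshTransform (layerBoundary n) T| ≤ 6 * n.centralBinom := by
  induction ht : #T using Nat.twoStepInduction generalizing T with
  | zero =>
    rw [walshTransform_layerBoundary_eq_mem hn, Finset.card_eq_zero.1 ht]
    simp
  | one => exact absurd ht hT_one
  | more t ih _ =>
    obtain ⟨T₀, -, hT₀⟩ := Finset.exists_subset_card_eq (s := T) (n := t) (by lia)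
    have hrec := mul_abs_walshTransform_layerBoundary_of_card_eq_add_two hn
      (T := T₀) (T' := T) (by lia)
    rw [hT₀] at hrec
    by_cases ht_one : t = 1
    · rw [abs_walshTransform_layerBoundary_of_card_eq_one hn (hT₀.trans ht_one), ht_one,
        Nat.cast_one] at hrec
      linarith
    · have htn : (t + 2 : ℝ) ≤ n + 1 := by exact_mod_cast ht ▸ hT
      have : (0 : ℝ) ≤ t := by positivity
      have hdecr :
          |walshTransform (layerBoundary n) T| ≤ |walshTransform (layerBoundary n) T₀| := by
        refine le_of_mul_le_mul_left ?_ (by linarith : (0 : ℝ) < 2 * n - t)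
        rw [hrec]
        gcongr
        linarith
      refine le_trans ?_ (ih (by lia) (by lia) hT₀)
      gcongr
      linarith

theorem mul_abs_walshTransform_layerBoundary_le (hn : Fintype.card ι = 2 * n) {T : Finset ι}
    (hT_one : #T ≠ 1) (hTc_one : #Tᶜ ≠ 1) :
    (2 * n - 1) * |walshTransform (layerBoundary n) T| ≤ 6 * n.centralBinom := by
  obtain hT | hT := le_or_gt #T (n + 1)
  · exact mul_abs_walshTransform_layerBoundary_le_of_le hn hT hT_one
  · rw [← abs_walshTransform_layerBoundary_compl hn]
    exact mul_abs_walshTransform_layerBoundary_le_of_le hn (by rw [Finset.card_compl]; lia) hTc_one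

end Layer

/-! ### Rectangle sums of the layer boundary -/

section LayerRectangle

theorem two_pow_two_mul_le_mul_centralBinom {n : ℕ} (hn : 0 < n) :
    (2 : ℝ) ^ (2 * n) ≤ 2 * n * n.centralBinom := by
  rw [pow_mul]
  norm_num
  exact_mod_cast Nat.four_pow_le_two_mul_self_mul_centralBinom n hn

variable {ι : Type*} [Fintype ι]

theorem card_le_two_pow (A : Finset (Finset ι)) : (#A : ℝ) ≤ 2 ^ Fintype.card ι := by
  exact_mod_cast A.card_le_univ.trans_eq Fintype.card_finset

variable [DecidableEq ι] {n : ℕ}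

theorem two_pow_mul_sum_sum_symmDiff (f : Finset ι → ℝ) (A B : Finset (Finset ι)) :
    2 ^ Fintype.card ι * ∑ S ∈ A, ∑ S' ∈ B, f (S ∆ S') =
      ∑ T, walshTransform f T * ((∑ S ∈ A, walsh T S) * ∑ S' ∈ B, walsh T S') := by
  simp only [Finset.sum_mul_sum]
  simp only [Finset.mul_sum, ← sum_walshTransform_mul_walsh, walsh_symmDiff_right,
    Finset.sum_comm (s := Finset.univ)]

theorem sum_sq_sum_walsh_eq_card (A : Finset (Finset ι)) :
    ∑ T, (∑ S ∈ A, walsh T S) ^ 2 = 2 ^ Fintype.card ι * #A := by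
  simpa [walsh_comm] using sum_sq_sum_walsh A Function.injective_id 1

theorem sum_abs_mul_abs_sum_walsh_le (A B : Finset (Finset ι)) :
    ∑ T, |∑ S ∈ A, walsh T S| * |∑ S ∈ B, walsh T S| ≤
      2 ^ Fintype.card ι * (√(#A : ℝ) * √(#B : ℝ)) := by
  refine (Real.sum_mul_le_sqrt_mul_sqrt _ _ _).trans_eq ?_
  simp only [sq_abs, sum_sq_sum_walsh_eq_card]
  rw [Real.sqrt_mul (by positivity), Real.sqrt_mul (by positivity), mul_mul_mul_comm,
    Real.mul_self_sqrt (by positivity)]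

theorem sum_abs_mul_abs_sum_walsh_symmDiff_singleton_le (R : Finset ι) {A : Finset (Finset ι)}
    (B : Finset (Finset ι)) {x : ℝ} (hx : 0 ≤ x) (hA : #A = 2 ^ Fintype.card ι * x ^ 6) :
    ∑ i, |∑ S ∈ A, walsh (R ∆ {i}) S| * |∑ S ∈ B, walsh (R ∆ {i}) S| ≤
      2 * 2 ^ Fintype.card ι * x * (√(#A : ℝ) * √(#B : ℝ)) := by
  set K : ℝ := 2 ^ Fintype.card ι
  have hK : 0 < K := by positivity
  have hx_le : x ≤ 1 := by
    refine (pow_le_one_iff_of_nonneg hx (n := 6) (by norm_num)).1 ?_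
    refine le_of_mul_le_mul_left ?_ hK
    rw [← hA, mul_one]
    exact card_le_two_pow A
  refine le_of_pow_le_pow_left₀ four_ne_zero (by positivity) ?_
  calc (∑ i, |∑ S ∈ A, walsh (R ∆ {i}) S| * |∑ S ∈ B, walsh (R ∆ {i}) S|) ^ 4
      = ((∑ i, |∑ S ∈ A, walsh (R ∆ {i}) S| * |∑ S ∈ B, walsh (R ∆ {i}) S|) ^ 2) ^ 2 := by ring
    _ ≤ ((∑ i, (∑ S ∈ A, walsh (R ∆ {i}) S) ^ 2) * ∑ i, (∑ S ∈ B, walsh (R ∆ {i}) S) ^ 2) ^ 2 := by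
      gcongr
      simpa only [sq_abs] using Finset.sum_mul_sq_le_sq_mul_sq Finset.univ
        (fun i => |∑ S ∈ A, walsh (R ∆ {i}) S|) fun i => |∑ S ∈ B, walsh (R ∆ {i}) S|
    _ ≤ (3 * K * (#A : ℝ) ^ 3) * (3 * K * (#B : ℝ) ^ 3) := by
      rw [mul_pow]
      gcongr <;> exact sq_sum_sq_sum_walsh_symmDiff_singleton_le _ _
    _ = 9 * (K ^ 3 * x ^ 6) * ((#A : ℝ) ^ 2 * (#B : ℝ) ^ 2) * #B := by rw [hA]; ring
    _ ≤ 16 * (K ^ 3 * x ^ 4) * ((#A : ℝ) ^ 2 * (#B : ℝ) ^ 2) * K := by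
      have hx_pow : x ^ 6 ≤ x ^ 4 := pow_le_pow_of_le_one hx hx_le (by norm_num)
      gcongr
      · norm_num
      · exact card_le_two_pow B
    _ = (2 * K * x * (√(#A : ℝ) * √(#B : ℝ))) ^ 4 := by
      have hsqrt (C : Finset (Finset ι)) : √(#C : ℝ) ^ 4 = (#C : ℝ) ^ 2 := by
        rw [← Real.sq_sqrt (Nat.cast_nonneg #C), ← pow_mul, Real.sq_sqrt (Nat.cast_nonneg #C)]
      simp only [mul_pow, hsqrt]
      ring

theorem abs_walshTransform_layerBoundary_le (hn : Fintype.card ι = 2 * n) (hn_pos : 0 < n)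
    (T : Finset ι) :
    |walshTransform (layerBoundary n) T| ≤ 2 * n.centralBinom *
      ((∑ i, if T = ∅ ∆ {i} then 1 else 0) + ∑ i, if T = Finset.univ ∆ {i} then 1 else 0) +
        6 * n.centralBinom / (2 * n - 1) := by
  have hn_one : (1 : ℝ) ≤ n := by exact_mod_cast hn_pos
  have hrest : 0 ≤ 6 * (n.centralBinom : ℝ) / (2 * n - 1) :=
    div_nonneg (by positivity) (by linarith)
  have hsum_nonneg (R : Finset ι) : 0 ≤ ∑ i, if T = R ∆ {i} then (1 : ℝ) else 0 := by positivity
  have hsum_one {R : Finset ι} {i : ι} (hi : T = R ∆ {i}) :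
      1 ≤ ∑ i, if T = R ∆ {i} then (1 : ℝ) else 0 := by
    simp [hi]
  by_cases hT : #T = 1
  · obtain ⟨i, hi⟩ := Finset.card_eq_one.1 hT
    have hone := hsum_one (R := ∅) (i := i) (by rw [hi, ← Finset.bot_eq_empty, bot_symmDiff])
    rw [abs_walshTransform_layerBoundary_of_card_eq_one hn hT]
    nlinarith [hsum_nonneg Finset.univ]
  by_cases hTc : #Tᶜ = 1
  · obtain ⟨i, hi⟩ := Finset.card_eq_one.1 hTc
    have hone := hsum_one (R := Finset.univ) (i := i) (by
      rw [← hi, ← Finset.top_eq_univ, top_symmDiff, hnot_eq_compl, compl_compl])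
    rw [← abs_walshTransform_layerBoundary_compl hn,
      abs_walshTransform_layerBoundary_of_card_eq_one hn hTc]
    nlinarith [hsum_nonneg ∅]
  · refine le_add_of_nonneg_of_le (by positivity) ?_
    rw [le_div_iff₀' (by linarith)]
    exact mul_abs_walshTransform_layerBoundary_le hn hT hTc

theorem sum_sum_ite_eq_mul {κ : Type*} [Fintype κ] (R : κ → Finset ι) (c : Finset ι → ℝ) :
    ∑ T, (∑ i, if T = R i then 1 else 0) * c T = ∑ i, c (R i) := by
  simp only [Finset.sum_mul, ite_mul, one_mul, zero_mul]
  rw [Finset.sum_comm]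
  simp

theorem abs_sum_sum_layerBoundary_le_of_le (hn : Fintype.card ι = 2 * n) (hn_pos : 0 < n)
    {A : Finset (Finset ι)} (B : Finset (Finset ι)) {x : ℝ} (hx : 0 ≤ x)
    (hA : #A = 2 ^ Fintype.card ι * x ^ 6) (hnx : 1 ≤ 2 * n * x) :
    |∑ S ∈ A, ∑ S' ∈ B, layerBoundary n (S ∆ S')| ≤
      20 * n.centralBinom * x * (√(#A : ℝ) * √(#B : ℝ)) := by
  set c : Finset ι → ℝ := fun T => |∑ S ∈ A, walsh T S| * |∑ S ∈ B, walsh T S|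
  set r : ℝ := 6 * n.centralBinom / (2 * n - 1) with hr_def
  have hn_one : (1 : ℝ) ≤ n := by exact_mod_cast hn_pos
  have : 0 ≤ r := div_nonneg (by positivity) (by linarith)
  have hr : r ≤ 12 * n.centralBinom * x := by
    rw [hr_def, div_le_iff₀ (by linarith)]
    have : 1 ≤ 2 * x * (2 * n - 1) := by nlinarith
    nlinarith [Nat.cast_nonneg (α := ℝ) n.centralBinom]
  refine le_of_mul_le_mul_left ?_ (by positivity : (0 : ℝ) < 2 ^ Fintype.card ι)
  calc 2 ^ Fintype.card ι * |∑ S ∈ A, ∑ S' ∈ B, layerBoundary n (S ∆ S')|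
      ≤ ∑ T, |walshTransform (layerBoundary n) T| * c T := by
        rw [← abs_of_nonneg (by positivity : (0 : ℝ) ≤ 2 ^ Fintype.card ι), ← abs_mul,
          two_pow_mul_sum_sum_symmDiff]
        refine (Finset.abs_sum_le_sum_abs _ _).trans_eq (Finset.sum_congr rfl fun T _ => ?_)
        rw [abs_mul, abs_mul]
    _ ≤ 2 * n.centralBinom * (∑ i, c (∅ ∆ {i}) + ∑ i, c (Finset.univ ∆ {i})) + r * ∑ T, c T := by
      rw [← sum_sum_ite_eq_mul _ c, ← sum_sum_ite_eq_mul _ c, ← Finset.sum_add_distrib,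
        Finset.mul_sum, Finset.mul_sum, ← Finset.sum_add_distrib]
      refine Finset.sum_le_sum fun T _ => ?_
      rw [← add_mul, ← mul_assoc (2 * _ : ℝ) (_ + _), ← add_mul]
      exact mul_le_mul_of_nonneg_right (abs_walshTransform_layerBoundary_le hn hn_pos T)
        (by positivity)
    _ ≤ 2 * n.centralBinom * (2 * 2 ^ Fintype.card ι * x * (√(#A : ℝ) * √(#B : ℝ)) +
          2 * 2 ^ Fintype.card ι * x * (√(#A : ℝ) * √(#B : ℝ))) +
        12 * n.centralBinom * x * (2 ^ Fintype.card ι * (√(#A : ℝ) * √(#B : ℝ))) := by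
      gcongr
      · exact sum_abs_mul_abs_sum_walsh_symmDiff_singleton_le _ B hx hA
      · exact sum_abs_mul_abs_sum_walsh_symmDiff_singleton_le _ B hx hA
      · exact sum_abs_mul_abs_sum_walsh_le A B
    _ = _ := by ring

theorem abs_sum_sum_layerBoundary_le_of_ge (hn : Fintype.card ι = 2 * n) (hn_pos : 0 < n)
    {A : Finset (Finset ι)} (B : Finset (Finset ι)) {x : ℝ} (hx : 0 ≤ x)
    (hA : #A = 2 ^ Fintype.card ι * x ^ 6) (hnx : 2 * n * x ≤ 1) :
    |∑ S ∈ A, ∑ S' ∈ B, layerBoundary n (S ∆ S')| ≤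
      n.centralBinom * x * (√(#A : ℝ) * √(#B : ℝ)) := by
  have htrivial : |∑ S ∈ A, ∑ S' ∈ B, layerBoundary n (S ∆ S')| ≤ 2 * n * (#A * #B) := by
    have hentry (S S' : Finset ι) : |layerBoundary n (S ∆ S')| ≤ 2 * n := by
      simpa [hn] using abs_layerBoundary_le n (S ∆ S')
    calc _ ≤ ∑ S ∈ A, ∑ S' ∈ B, |layerBoundary n (S ∆ S')| :=
          (Finset.abs_sum_le_sum_abs _ _).trans
            (Finset.sum_le_sum fun S _ => Finset.abs_sum_le_sum_abs _ _)
      _ ≤ ∑ S ∈ A, ∑ S' ∈ B, (2 * n : ℝ) := by gcongr; exact hentry _ _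
      _ = _ := by simp; ring
  have hsqrtA : √(#A : ℝ) = √(2 ^ Fintype.card ι) * x ^ 3 := by
    rw [hA, Real.sqrt_mul (by positivity), show x ^ 6 = (x ^ 3) ^ 2 by ring,
      Real.sqrt_sq (by positivity)]
  have hsqrtB : √(#B : ℝ) ≤ √(2 ^ Fintype.card ι) := Real.sqrt_le_sqrt (card_le_two_pow B)
  have hsqrt : √(#A : ℝ) * √(#B : ℝ) ≤ 2 * n * n.centralBinom * x ^ 3 := by
    calc _ ≤ √(2 ^ Fintype.card ι) * x ^ 3 * √(2 ^ Fintype.card ι) := by rw [hsqrtA]; gcongr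
      _ = 2 ^ Fintype.card ι * x ^ 3 := by
        rw [mul_right_comm, Real.mul_self_sqrt (by positivity)]
      _ ≤ _ := by
        gcongr
        exact hn ▸ two_pow_two_mul_le_mul_centralBinom hn_pos
  calc _ ≤ 2 * n * (#A * #B : ℝ) := htrivial
    _ = 2 * n * (√(#A : ℝ) * √(#B : ℝ)) * (√(#A : ℝ) * √(#B : ℝ)) := by
      rw [mul_assoc (2 * n : ℝ) (_ * _), mul_mul_mul_comm (√(#A : ℝ)),
        Real.mul_self_sqrt (by positivity), Real.mul_self_sqrt (by positivity)]
    _ ≤ 2 * n * (2 * n * n.centralBinom * x ^ 3) * (√(#A : ℝ) * √(#B : ℝ)) := by gcongr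
    _ = (2 * n * x) ^ 2 * (n.centralBinom * x * (√(#A : ℝ) * √(#B : ℝ))) := by ring
    _ ≤ 1 ^ 2 * (n.centralBinom * x * (√(#A : ℝ) * √(#B : ℝ))) := by gcongr
    _ = _ := by ring

theorem rectangleBound_layerBoundary (hn : Fintype.card ι = 2 * n) (hn_pos : 0 < n) :
    RectangleBound (fun S S' : Finset ι => layerBoundary n (S ∆ S'))
      (20 * n.centralBinom / (2 ^ Fintype.card ι) ^ (1 / 6 : ℝ)) (1 / 6) := by
  intro A B
  obtain ⟨x, hx, hA, hbound⟩ : ∃ x : ℝ, 0 ≤ x ∧ #A = 2 ^ Fintype.card ι * x ^ 6 ∧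
      20 * n.centralBinom / (2 ^ Fintype.card ι) ^ (1 / 6 : ℝ) * (#A : ℝ) ^ (1 / 6 : ℝ) =
        20 * n.centralBinom * x := by
    refine ⟨(#A / 2 ^ Fintype.card ι) ^ (1 / 6 : ℝ), by positivity, ?_, ?_⟩
    · rw [← Real.rpow_mul_natCast (by positivity)]
      norm_num
      rw [mul_div_cancel₀ _ (by positivity)]
    · rw [Real.div_rpow (by positivity) (by positivity)]
      ring
  rw [hbound]
  obtain hnx | hnx := le_total 1 (2 * n * x)
  · exact abs_sum_sum_layerBoundary_le_of_le hn hn_pos B hx hA hnx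
  · refine (abs_sum_sum_layerBoundary_le_of_ge hn hn_pos B hx hA hnx).trans ?_
    gcongr
    linarith [Nat.cast_nonneg (α := ℝ) n.centralBinom]

end LayerRectangle

/-! ### Half-space probabilities of convolution powers -/

section HalfSpaceConst

/-- The constant of the theorem for intersections of `m` half-spaces: `20` comes from
`rectangleBound_layerBoundary` and each half-space costs one application of
`RectangleBound.threshold` with exponent `1 / 6`. -/
noncomputable def halfSpaceConst (m : ℕ) : ℝ := 20 / (1 - 2 ^ (-(1 / 6) : ℝ)) ^ m

theorem halfSpaceConst_pos (m : ℕ) : 0 < halfSpaceConst m := by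
  have : (2 : ℝ) ^ (-(1 / 6) : ℝ) < 1 :=
    Real.rpow_lt_one_of_one_lt_of_neg one_lt_two (by norm_num)
  exact div_pos (by norm_num) (pow_pos (sub_pos.2 this) m)

variable {ι κ L : Type*} [Fintype ι] [DecidableEq ι] [Fintype κ] [LinearOrder L] {n : ℕ}

theorem abs_sum_sum_layerBoundary_thresholds_le (hn : Fintype.card ι = 2 * n) (hn_pos : 0 < n)
    (p q : κ → Finset ι → L) :
    |∑ S, ∑ T, if ∀ i, p i S ≤ q i T then layerBoundary n (S ∆ T) else 0| ≤
      halfSpaceConst (Fintype.card κ) * (2 ^ Fintype.card ι * n.centralBinom) := by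
  have h := (rectangleBound_layerBoundary hn hn_pos).thresholds (by positivity) (by norm_num) p q
    Finset.univ Finset.univ Finset.univ
  simp only [Finset.mem_univ, true_imp_iff, Finset.card_univ, Fintype.card_finset] at h
  push_cast at h
  refine h.trans_eq ?_
  rw [Real.mul_self_sqrt (by positivity), halfSpaceConst]
  field_simp

end HalfSpaceConst

theorem ite_thresholds_eq_indicator {κ ι E : Type*} [Fintype κ] [AddCommGroup E]
    (ℓ : κ → E →+ ℝ) (x : κ → ℝ) (S T : Finset ι) (c : ℝ) :
    (fun a : ι → E => if ∀ i, ℓ i (∑ j ∈ S, a j) ≤ ℓ i (∑ j ∈ T, a j) + x i then c else 0) =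
      ((fun a => ∑ j ∈ S, a j - ∑ j ∈ T, a j) ⁻¹' {y | ∀ i, ℓ i y ≤ x i}).indicator fun _ => c := by
  classical
  ext a
  rw [Set.indicator_apply]
  exact if_congr (forall_congr' fun i => by rw [map_sub, tsub_le_iff_left]) rfl rfl

section Law

variable {ι E : Type*} [Fintype ι] [MeasurableSpace E] {F : Measure E}

theorem measurePreserving_sum_convPow [AddCommMonoid E] [MeasurableAdd₂ E] [IsProbabilityMeasure F]
    (S : Finset ι) :
    MeasurePreserving (fun a => ∑ i ∈ S, a i) (Measure.pi fun _ : ι => F) (convPow F #S) := by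
  refine ⟨by fun_prop, ?_⟩
  have hindep : ProbabilityTheory.iIndepFun (fun (i : ι) (a : ι → E) => a i)
      (Measure.pi fun _ : ι => F) :=
    ProbabilityTheory.iIndepFun_pi (X := fun _ => id) fun _ => aemeasurable_id
  induction S using Finset.cons_induction with
  | empty => simp [convPow]
  | cons i S hi ih =>
    have hadd := (hindep.indepFun_finsetSum_of_notMem (fun i => measurable_pi_apply i)
      hi).map_add_eq_map_conv_map (by fun_prop) (measurable_pi_apply i)
    rw [Finset.sum_fn, ih, (measurePreserving_eval (fun _ : ι => F) i).map_eq] at hadd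
    simpa only [Finset.sum_cons, Finset.card_cons, add_comm] using! hadd

variable [AddCommGroup E] [MeasurableAdd₂ E] [MeasurableNeg E] [IsProbabilityMeasure F]
  [DecidableEq ι]

theorem measurePreserving_sum_sub_sum_convPow (hF : F.map (fun y => -y) = F) (S T : Finset ι) :
    MeasurePreserving (fun a => ∑ i ∈ S, a i - ∑ i ∈ T, a i) (Measure.pi fun _ : ι => F)
      (convPow F #(S ∆ T)) := by
  set σ : ι → E → E := fun i y => if i ∈ T then -y else y
  have hσ (i : ι) : MeasurePreserving (σ i) F F := by
    by_cases hi : i ∈ T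
    · simpa only [σ, hi, if_true] using ⟨measurable_neg, hF⟩
    · simpa only [σ, hi, if_false] using! MeasurePreserving.id F
  have hsum (a : ι → E) : ∑ i ∈ S, a i - ∑ i ∈ T, a i = ∑ i ∈ S ∆ T, σ i (a i) := by
    rw [← Finset.univ_inter S, ← Finset.univ_inter T, ← Finset.univ_inter (_ ∆ _)]
    simp only [← Finset.sum_ite_mem, ← Finset.sum_sub_distrib, Finset.mem_symmDiff]
    refine Finset.sum_congr rfl fun i _ => ?_
    by_cases hS : i ∈ S <;> by_cases hT : i ∈ T <;> simp [hS, hT, σ]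
  simpa only [hsum] using!
    (measurePreserving_sum_convPow (S ∆ T)).comp (measurePreserving_pi _ _ hσ)

variable {κ : Type*} [Fintype κ] {ℓ : κ → E →+ ℝ} {x : κ → ℝ}

theorem integral_sum_sum_layerBoundary_thresholds {n : ℕ} (hn : Fintype.card ι = 2 * n)
    (hF : F.map (fun y => -y) = F) (hℓ : ∀ i, Measurable (ℓ i)) :
    ∫ a, (∑ S, ∑ T, if ∀ i, ℓ i (∑ j ∈ S, a j) ≤ ℓ i (∑ j ∈ T, a j) + x i
        then layerBoundary n (S ∆ T) else 0) ∂Measure.pi (fun _ : ι => F) =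
      2 ^ Fintype.card ι * n.centralBinom *
        (n * ((convPow F (n - 1)).real {y | ∀ i, ℓ i y ≤ x i} -
          (convPow F (n + 1)).real {y | ∀ i, ℓ i y ≤ x i})) := by
  have hset : MeasurableSet {y | ∀ i, ℓ i y ≤ x i} := by measurability
  set u : ℕ → ℝ := fun m => (convPow F m).real {y | ∀ i, ℓ i y ≤ x i}
  have hpre (S T : Finset ι) := (measurePreserving_sum_sub_sum_convPow hF S T).measurable hset
  have hint (S T : Finset ι) := (integrable_const (layerBoundary n (S ∆ T))).indicator (hpre S T)
    (μ := Measure.pi fun _ => F)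
  simp only [← ite_thresholds_eq_indicator] at hint
  calc _ = ∑ S, ∑ T, layerBoundary n (S ∆ T) * u #(S ∆ T) := by
        rw [integral_finsetSum _ fun S _ => integrable_finsetSum _ fun T _ => hint S T]
        simp only [integral_finsetSum _ fun T _ => hint _ T, ite_thresholds_eq_indicator,
          integral_indicator_const _ (hpre _ _), smul_eq_mul, mul_comm, u,
          fun S T => (measurePreserving_sum_sub_sum_convPow hF S T).measureReal_preimage
            hset.nullMeasurableSet]
    _ = ∑ S : Finset ι, ∑ T, layerBoundary n T * u #T :=
        Finset.sum_congr rfl fun S _ => (symmDiff_right_involutive S).bijective.sum_comp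
          fun T => layerBoundary n T * u #T
    _ = _ := by
      rw [sum_layerBoundary_mul_card hn]
      simp [mul_assoc, u]

end Law

section HalfSpaces

variable {κ E : Type*} [Fintype κ] [AddCommGroup E] [MeasurableSpace E] [MeasurableAdd₂ E]
  [MeasurableNeg E] {F : Measure E} [IsProbabilityMeasure F] {ℓ : κ → E →+ ℝ} {x : κ → ℝ}

theorem abs_convPow_real_sub_add_two_le (hF : F.map (fun y => -y) = F)
    (hℓ : ∀ i, Measurable (ℓ i)) (m : ℕ) :
    |(convPow F m).real {y | ∀ i, ℓ i y ≤ x i} - (convPow F (m + 2)).real {y | ∀ i, ℓ i y ≤ x i}| ≤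
      halfSpaceConst (Fintype.card κ) / (m + 1) := by
  have hn : Fintype.card (Fin (2 * (m + 1))) = 2 * (m + 1) := Fintype.card_fin _
  have hint := integral_sum_sum_layerBoundary_thresholds (x := x) hn hF hℓ
  have hle := norm_integral_le_of_norm_le_const (μ := Measure.pi fun _ => F) <| .of_forall fun a =>
    (Real.norm_eq_abs _).trans_le <| abs_sum_sum_layerBoundary_thresholds_le hn m.succ_pos
      (fun i S => ℓ i (∑ j ∈ S, a j)) fun i T => ℓ i (∑ j ∈ T, a j) + x i
  rw [hint, probReal_univ, mul_one, Real.norm_eq_abs, abs_mul, abs_of_nonneg (by positivity),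
    mul_comm (halfSpaceConst _)] at hle
  rw [le_div_iff₀' (by positivity), ← abs_of_nonneg (by positivity : (0 : ℝ) ≤ m + 1), ← abs_mul]
  exact_mod_cast le_of_mul_le_mul_left hle
    (mul_pos (by positivity) (Nat.cast_pos.2 (m + 1).centralBinom_pos))

theorem stmt5_general (hF : F.map (fun y => -y) = F) (hℓ : ∀ i, Measurable (ℓ i)) (k : ℕ) {n : ℕ}
    (hn : 0 < n) :
    |(convPow F n).real {y | ∀ i, ℓ i y ≤ x i} -
      (convPow F (n + 2 * k)).real {y | ∀ i, ℓ i y ≤ x i}| ≤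
      halfSpaceConst (Fintype.card κ) * k * (n : ℝ)⁻¹ := by
  calc _ ≤ ∑ j ∈ Finset.range k, halfSpaceConst (Fintype.card κ) / ((n + 2 * j : ℕ) + 1) :=
        dist_le_range_sum_of_dist_le
          (f := fun j => (convPow F (n + 2 * j)).real {y | ∀ i, ℓ i y ≤ x i}) k
          fun _ => abs_convPow_real_sub_add_two_le hF hℓ _
    _ ≤ ∑ _ ∈ Finset.range k, halfSpaceConst (Fintype.card κ) / n := by
      gcongr with j
      · exact (halfSpaceConst_pos _).le
      · push_cast
        linarith [j.cast_nonneg (α := ℝ)]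
    _ = _ := by
      rw [Finset.sum_const, Finset.card_range, nsmul_eq_mul]
      ring

end HalfSpaces

theorem stmt5 :
    ∃ C : ℕ → ℝ, (∀ d, 0 < C d) ∧
      ∀ (d k n : ℕ), 0 < d → 0 < k → 0 < n →
        ∀ F : Measure (Euc d), IsProbabilityMeasure F → IsSymmMeasure F →
          kolmDist (convPow F n) (convPow F (n + 2 * k)) ≤ C d * k * (n : ℝ)⁻¹ := by
  refine ⟨halfSpaceConst, halfSpaceConst_pos, fun d k n _ _ hn F _ hF => ciSup_le fun x => ?_⟩
  simpa using! stmt5_general (x := x) (ℓ := fun i => (EuclideanSpace.proj i : Euc d →L[ℝ] ℝ)) hF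
    (fun i => (EuclideanSpace.proj (𝕜 := ℝ) i).measurable) k hn
end

section
/- There exist an absolute constant c > 0 and, for each d ∈ ℕ, a constant c(d) > 0 such that for every F ∈ 𝔉_d^s and all k, n ∈ ℕ one has ρ(F^n, F^{n+2k+1}) ≤ c · d · n^{−1/2} + c(d) · k · n^{−1}. -/
open MeasureTheory RealInnerProductSpace
open scoped ENNReal

/-!
Let `u t` be the value at a fixed point of the distribution function of `F ^ t`. Adding a single
summand `X` changes `u` by `O(d / √n)`: for the indicator `g` of a half-line in one coordinate, the
probability that `X` carries the sum across its endpoint is, by symmetry, a correlation between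
`g (S)` and `sign X`, and exchangeability averages it over all the signs, whose mean is
`O(1 / √n)`.

For `2 k` further summands, a Marchaud inequality reduces `|u (n + 2 k) - u n| = O(k / n)` to a
bound `O((s / n) ^ γ)`, `γ > 1`, on the differences of `u` of some high order `r` and step `2 s`,
and grouping the summands reduces this to step `2`. The characteristic function of a symmetric `F`
is real, so against an integrable superposition of characters the `r`-th difference of step `2` at
`2 m` is at most `sup q ^ m (1 - q) ^ r = O(m ^ (-r))` over `0 ≤ q ≤ 1`, a gain as large as one
likes. The indicator of an orthant is not such a superposition, so `F` is first replaced by the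
symmetrized empirical measure of `N` points, at the cost `t ^ 2 / N` of a collision among `t`
draws. Its convolution powers live on a generalized arithmetic progression of rank `N`, which has
only polynomially many dyadic scales, because lacunary elements have distinct subset sums. A dyadic
partition of unity hence writes the indicator, on that support, as a sum of polynomially many
smooth bumps of arbitrary widths, and the Fourier bound does not see the widths.
-/

open ProbabilityTheory Filter Topology FourierTransform
open scoped fwdDiff

noncomputable section

namespace ConvolutionPower

section ConvPow

variable {α : Type*} [MeasurableSpace α]

lemma convPow_succ [AddMonoid α] (μ : Measure α) (n : ℕ) :
    convPow μ (n + 1) = convPow μ n ∗ μ := rfl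

instance isProbabilityMeasure_convPow [AddMonoid α] [MeasurableAdd₂ α] (μ : Measure α)
    [IsProbabilityMeasure μ] (n : ℕ) : IsProbabilityMeasure (convPow μ n) := by
  induction n with
  | zero => exact Measure.dirac.isProbabilityMeasure
  | succ n ih => rw [convPow_succ]; infer_instance

lemma convPow_add [AddMonoid α] [MeasurableAdd₂ α] (μ : Measure α) [IsProbabilityMeasure μ]
    (a b : ℕ) : convPow μ (a + b) = convPow μ a ∗ convPow μ b := by
  induction b with
  | zero => exact (Measure.conv_dirac_zero _).symm
  | succ b ih => rw [← add_assoc, convPow_succ, ih, Measure.conv_assoc, ← convPow_succ]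

lemma convPow_mul [AddMonoid α] [MeasurableAdd₂ α] (μ : Measure α) [IsProbabilityMeasure μ]
    (s j : ℕ) : convPow μ (s * j) = convPow (convPow μ s) j := by
  induction j with
  | zero => rfl
  | succ j ih => rw [Nat.mul_succ, convPow_add, ih, ← convPow_succ]

instance isNegInvariant_convPow [AddCommGroup α] [MeasurableAdd₂ α] [MeasurableNeg α]
    (μ : Measure α) [IsProbabilityMeasure μ] [μ.IsNegInvariant] (n : ℕ) :
    (convPow μ n).IsNegInvariant := by
  induction n with
  | zero => exact ⟨(Measure.map_dirac' measurable_neg 0).trans (by rw [neg_zero]; rfl)⟩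
  | succ n ih =>
    refine ⟨(Measure.map_conv_addMonoidHom negAddMonoidHom measurable_neg).trans ?_⟩
    exact congrArg₂ _ (Measure.map_neg_eq_self _) (Measure.map_neg_eq_self _)

lemma charFun_convPow {E : Type*} [NormedAddCommGroup E] [InnerProductSpace ℝ E]
    [MeasurableSpace E] [BorelSpace E] [SecondCountableTopology E] (μ : Measure E)
    [IsProbabilityMeasure μ] (n : ℕ) (t : E) :
    charFun (convPow μ n) t = charFun μ t ^ n := by
  induction n with
  | zero => simp [convPow]
  | succ n ih => rw [convPow_succ, charFun_conv, ih, pow_succ]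

lemma measureReal_prod_eq_integral {β : Type*} [MeasurableSpace β] (μ : Measure α) (ν : Measure β)
    [IsProbabilityMeasure ν] {s : Set (α × β)} (hs : MeasurableSet s) :
    (μ.prod ν).real s = ∫ a, ν.real (Prod.mk a ⁻¹' s) ∂μ := by
  rw [measureReal_def, Measure.prod_apply hs]
  exact (integral_toReal (measurable_measure_prodMk_left hs).aemeasurable
    (.of_forall fun _ => measure_lt_top _ _)).symm

lemma norm_measureReal_le_one {α : Type*} [MeasurableSpace α] (μ : Measure α)
    [IsProbabilityMeasure μ] (s : Set α) : ‖μ.real s‖ ≤ 1 :=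
  (Real.norm_of_nonneg measureReal_nonneg).trans_le measureReal_le_one

lemma integrable_measureReal_prodMk {β : Type*} [MeasurableSpace β] (μ : Measure α)
    [IsFiniteMeasure μ] (ν : Measure β) [IsProbabilityMeasure ν] {s : Set (α × β)}
    (hs : MeasurableSet s) : Integrable (fun a => ν.real (Prod.mk a ⁻¹' s)) μ :=
  .of_bound (measurable_measure_prodMk_left hs).ennreal_toReal.aestronglyMeasurable 1
    (.of_forall fun _ => norm_measureReal_le_one _ _)

lemma measureReal_conv [AddMonoid α] [MeasurableAdd₂ α] (μ ν : Measure α) [IsProbabilityMeasure ν]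
    {B : Set α} (hB : MeasurableSet B) :
    (μ ∗ ν).real B = ∫ a, ν.real ((a + ·) ⁻¹' B) ∂μ := by
  rw [Measure.conv, map_measureReal_apply measurable_add hB,
    measureReal_prod_eq_integral _ _ (measurable_add hB)]
  rfl

end ConvPow

section IndepSum

section Pi

variable {ι : Type*} [Fintype ι] {Ω : ι → Type*} [∀ i, MeasurableSpace (Ω i)]
  (μ : ∀ i, Measure (Ω i)) [∀ i, IsProbabilityMeasure (μ i)]

lemma iIndepFun_eval_pi : iIndepFun (fun i (ω : ∀ i, Ω i) => ω i) (Measure.pi μ) :=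
  iIndepFun_pi (X := fun _ => id) fun _ => aemeasurable_id

lemma map_prodMk_eval_pi {i j : ι} (hij : i ≠ j) :
    (Measure.pi μ).map (fun ω => (ω i, ω j)) = (μ i).prod (μ j) := by
  rw [(indepFun_iff_map_prod_eq_prod_map_map (measurable_pi_apply i).aemeasurable
    (measurable_pi_apply j).aemeasurable).1 ((iIndepFun_eval_pi μ).indepFun hij)]
  exact congrArg₂ _ (measurePreserving_eval μ i).map_eq (measurePreserving_eval μ j).map_eq

end Pi

variable {Ω ι α : Type*} [MeasurableSpace Ω] [MeasurableSpace α] [AddCommMonoid α]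
  [MeasurableAdd₂ α]

lemma map_sum_eq_convPow {P : Measure Ω} [IsProbabilityMeasure P] {F : Measure α} {X : ι → Ω → α}
    (hind : iIndepFun X P) (hX : ∀ i, Measurable (X i)) (hF : ∀ i, P.map (X i) = F)
    (s : Finset ι) : P.map (fun ω => ∑ i ∈ s, X i ω) = convPow F s.card := by
  classical
  simp only [← Finset.sum_apply]
  change P.map (∑ i ∈ s, X i) = _
  induction s using Finset.induction_on with
  | empty =>
    rw [Finset.sum_empty, Finset.card_empty]
    exact (Measure.map_const P 0).trans (by rw [measure_univ, one_smul]; rfl)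
  | insert j s hj ih =>
    have hsum : Measurable (∑ i ∈ s, X i) := by fun_prop
    have : SFinite F := hF j ▸ inferInstance
    rw [Finset.sum_insert hj, add_comm, Finset.card_insert_of_notMem hj, convPow_succ,
      (hind.indepFun_finsetSum_of_notMem hX hj).map_add_eq_map_conv_map hsum (hX j), ih, hF j]

lemma convPow_map (P : Measure Ω) [IsProbabilityMeasure P]
    {z : Ω → α} (hz : Measurable z) (t : ℕ) :
    convPow (P.map z) t =
      (Measure.pi fun _ : Fin t => P).map (fun a => ∑ j, z (a j)) := by
  have hlaw (j : Fin t) : (Measure.pi fun _ : Fin t => P).map (fun a => z (a j)) = P.map z := by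
    conv_rhs => rw [← (measurePreserving_eval (fun _ : Fin t => P) j).map_eq,
      Measure.map_map hz (measurable_pi_apply j)]
    rfl
  have h := map_sum_eq_convPow (iIndepFun_pi (X := fun _ : Fin t => z) fun _ => hz.aemeasurable)
    (fun j => hz.comp (measurable_pi_apply j)) hlaw Finset.univ
  rw [Finset.card_univ, Fintype.card_fin] at h
  exact h.symm

end IndepSum

section Variance

variable {Ω ι : Type*} [MeasurableSpace Ω] {P : Measure Ω} [IsProbabilityMeasure P]

lemma integral_abs_le_sqrt_variance {T : Ω → ℝ} (hT : MemLp T 2 P) (h0 : ∫ ω, T ω ∂P = 0) :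
    ∫ ω, |T ω| ∂P ≤ √(Var[T; P]) := by
  refine Real.le_sqrt_of_sq_le ?_
  have habs : 0 ≤ Var[fun ω => |T ω|; P] := variance_nonneg _ _
  rw [variance_eq_sub (X := fun ω => |T ω|) hT.abs] at habs
  rw [variance_of_integral_eq_zero hT.aemeasurable h0]
  simpa only [Pi.pow_apply, sq_abs, sub_nonneg] using habs

lemma integral_abs_sum_le_sqrt_card {Y : ι → Ω → ℝ} {s : Finset ι}
    (hY : ∀ i ∈ s, AEMeasurable (Y i) P) (hY1 : ∀ i ∈ s, ∀ ω, |Y i ω| ≤ 1)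
    (hY0 : ∀ i ∈ s, ∫ ω, Y i ω ∂P = 0)
    (hind : Set.Pairwise ↑s fun i j => IndepFun (Y i) (Y j) P) :
    ∫ ω, |∑ i ∈ s, Y i ω| ∂P ≤ √s.card := by
  have hmem (i : ι) (hi : i ∈ s) : MemLp (Y i) 2 P :=
    .of_bound (hY i hi).aestronglyMeasurable 1 (.of_forall (hY1 i hi))
  have hvar : Var[∑ i ∈ s, Y i; P] ≤ s.card := by
    rw [IndepFun.variance_sum hmem hind, ← nsmul_one, ← Finset.sum_const]
    refine Finset.sum_le_sum fun i hi => ?_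
    simpa using variance_le_sq_of_bounded
      (.of_forall fun ω => abs_le.1 (hY1 i hi ω)) (hY i hi)
  have h0 : ∫ ω, (∑ i ∈ s, Y i) ω ∂P = 0 := by
    simp only [Finset.sum_apply]
    rw [integral_finsetSum _ fun i hi => (hmem i hi).integrable one_le_two,
      Finset.sum_eq_zero hY0]
  simpa only [Finset.sum_apply] using (integral_abs_le_sqrt_variance
    (memLp_finsetSum' s hmem) h0).trans (Real.sqrt_le_sqrt hvar)

lemma sum_integral_mul_le_sqrt_card {G : Ω → ℝ} (hG : AEMeasurable G P) (hG1 : ∀ ω, |G ω| ≤ 1)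
    {Y : ι → Ω → ℝ} {s : Finset ι} (hY : ∀ i ∈ s, AEMeasurable (Y i) P)
    (hY1 : ∀ i ∈ s, ∀ ω, |Y i ω| ≤ 1) (hY0 : ∀ i ∈ s, ∫ ω, Y i ω ∂P = 0)
    (hind : Set.Pairwise ↑s fun i j => IndepFun (Y i) (Y j) P) :
    ∑ i ∈ s, ∫ ω, G ω * Y i ω ∂P ≤ √s.card := by
  have hint (i : ι) (hi : i ∈ s) : Integrable (fun ω => Y i ω) P :=
    .of_bound (hY i hi).aestronglyMeasurable 1 (.of_forall (hY1 i hi))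
  have hGY (i : ι) (hi : i ∈ s) : Integrable (fun ω => G ω * Y i ω) P :=
    (hint i hi).bdd_mul hG.aestronglyMeasurable (.of_forall hG1)
  rw [← integral_finsetSum _ hGY]
  refine (integral_mono (integrable_finsetSum _ hGY) (integrable_finsetSum _ hint).abs
    fun ω => ?_).trans (integral_abs_sum_le_sqrt_card hY hY1 hY0 hind)
  calc ∑ i ∈ s, G ω * Y i ω = G ω * ∑ i ∈ s, Y i ω := (Finset.mul_sum ..).symm
    _ ≤ |G ω| * |∑ i ∈ s, Y i ω| := (le_abs_self _).trans_eq (abs_mul _ _)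
    _ ≤ |∑ i ∈ s, Y i ω| := mul_le_of_le_one_left (abs_nonneg _) (hG1 ω)

end Variance

section Exchangeability

variable {α : Type*} [MeasurableSpace α] [AddCommMonoid α] [MeasurableAdd₂ α]

lemma map_sum_erase_prodMk_eq_prod (F : Measure α) [IsProbabilityMeasure F] (n : ℕ)
    (j : Fin (n + 1)) :
    (Measure.pi fun _ : Fin (n + 1) => F).map
      (fun ω => (∑ i ∈ Finset.univ.erase j, ω i, ω j)) = (convPow F n).prod F := by
  have hind := iIndepFun_eval_pi fun _ : Fin (n + 1) => F
  have hlaw (i : Fin (n + 1)) : (Measure.pi fun _ => F).map (fun ω : Fin (n + 1) → α => ω i) = F :=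
    (measurePreserving_eval (fun _ : Fin (n + 1) => F) i).map_eq
  have hsum := map_sum_eq_convPow hind measurable_pi_apply hlaw (Finset.univ.erase j)
  rw [Finset.card_erase_of_mem (Finset.mem_univ j), Finset.card_univ, Fintype.card_fin,
    Nat.add_sub_cancel] at hsum
  have hpair := (indepFun_iff_map_prod_eq_prod_map_map (by fun_prop)
    (measurable_pi_apply j).aemeasurable).1
    (hind.indepFun_finsetSum_of_notMem measurable_pi_apply (Finset.notMem_erase j Finset.univ))
  rw [hlaw] at hpair
  simpa only [Finset.sum_fn, hsum] using hpair

/- The left-hand side does not change when the second factor is replaced by any of the `n + 1`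
summands of a sample, so it is the mean over the summands, and independence bounds `E |∑ s(Xⱼ)|`. -/
lemma integral_mul_prod_convPow_le (F : Measure α) [IsProbabilityMeasure F] (n : ℕ) {g s : α → ℝ}
    (hg : Measurable g) (hs : Measurable s) (hg1 : ∀ y, |g y| ≤ 1) (hs1 : ∀ y, |s y| ≤ 1)
    (hs0 : ∫ y, s y ∂F = 0) :
    ∫ p, g (p.1 + p.2) * s p.2 ∂((convPow F n).prod F) ≤ 1 / √((n : ℝ) + 1) := by
  set P := Measure.pi fun _ : Fin (n + 1) => F
  set I := ∫ p, g (p.1 + p.2) * s p.2 ∂((convPow F n).prod F)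
  have hswap (j : Fin (n + 1)) : ∫ ω, g (∑ i, ω i) * s (ω j) ∂P = I := by
    simp only [I, ← map_sum_erase_prodMk_eq_prod F n j]
    rw [integral_map (by fun_prop) (Measurable.aestronglyMeasurable (by fun_prop))]
    simp only [Finset.sum_erase_add _ _ (Finset.mem_univ j), P]
  have hmean (j : Fin (n + 1)) : ∫ ω, s (ω j) ∂P = 0 := by
    rw [← hs0]
    exact (measurePreserving_eval (fun _ => F) j).hasLaw.integral_comp hs.aestronglyMeasurable
  have hind : iIndepFun (fun j (ω : Fin (n + 1) → α) => s (ω j)) P :=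
    iIndepFun_pi fun _ => hs.aemeasurable
  have hsum := sum_integral_mul_le_sqrt_card (s := Finset.univ) (P := P)
    (G := fun ω => g (∑ i, ω i)) (Measurable.aemeasurable (by fun_prop)) (fun _ => hg1 _)
    (fun j _ => (hs.comp (measurable_pi_apply j)).aemeasurable) (fun _ _ _ => hs1 _)
    (fun j _ => hmean j) (fun i _ j _ hij => hind.indepFun hij)
  simp only [Function.comp_apply, hswap, Finset.sum_const, nsmul_eq_mul, Finset.card_univ,
    Fintype.card_fin, Nat.cast_add_one] at hsum
  rwa [← Real.sqrt_div_self', le_div_iff₀ n.cast_add_one_pos, mul_comm]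

end Exchangeability

section Crossing

lemma abs_add_sub_add_abs_sub_sub {g : ℝ → ℝ} (hg : Monotone g) (a y : ℝ) :
    |g (a + y) - g a| + |g (a + -y) - g a| =
      g (a + y) * Real.sign y + g (a + -y) * Real.sign (-y) := by
  wlog hy : 0 ≤ y generalizing y
  · rw [add_comm, add_comm (_ * _)]
    simpa only [neg_neg] using this (-y) (by linarith)
  obtain rfl | hy := hy.eq_or_lt
  · simp
  rw [Real.sign_neg, Real.sign_of_pos hy, abs_of_nonneg (sub_nonneg.2 (hg (by linarith))),
    abs_of_nonpos (sub_nonpos.2 (hg (by linarith)))]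
  ring

lemma measurable_realSign : Measurable Real.sign :=
  .ite measurableSet_Iio measurable_const (.ite measurableSet_Ioi measurable_const measurable_const)

lemma abs_realSign_le_one (y : ℝ) : |Real.sign y| ≤ 1 := by
  rcases Real.sign_apply_eq y with h | h | h <;> simp [h]

variable {α : Type*} [MeasurableSpace α] [AddCommGroup α] [MeasurableNeg α]

lemma integral_prod_eq_of_symmetrization_eq {β : Type*} [MeasurableSpace β] (μ : Measure β)
    [SFinite μ] (ν : Measure α) [SFinite ν] [ν.IsNegInvariant] {f g : β × α → ℝ}
    (hf : Integrable f (μ.prod ν)) (hg : Integrable g (μ.prod ν))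
    (h : ∀ b a, f (b, a) + f (b, -a) = g (b, a) + g (b, -a)) :
    ∫ p, f p ∂(μ.prod ν) = ∫ p, g p ∂(μ.prod ν) := by
  have hrefl : MeasurePreserving (Prod.map id Neg.neg) (μ.prod ν) (μ.prod ν) :=
    (MeasurePreserving.id μ).prod (Measure.measurePreserving_neg ν)
  have hinv {k : β × α → ℝ} (hk : Integrable k (μ.prod ν)) :
      ∫ p : β × α, k (p.1, p.2) + k (p.1, -p.2) ∂(μ.prod ν) = 2 * ∫ p, k p ∂(μ.prod ν) := by
    refine (integral_add hk (hrefl.integrable_comp_of_integrable hk)).trans ?_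
    rw [hrefl.hasLaw.integral_comp hk.aestronglyMeasurable, two_mul]
  have hsymm := hinv hf
  simp only [h] at hsymm
  linarith [hinv hg]

lemma integral_abs_add_sub_le [MeasurableAdd₂ α] (F : Measure α) [IsProbabilityMeasure F]
    [F.IsNegInvariant] (n : ℕ) {L : α →+ ℝ} (hL : Measurable L) {g : ℝ → ℝ} (hg : Monotone g)
    (hg1 : ∀ y, |g y| ≤ 1) :
    ∫ p, |g (L (p.1 + p.2)) - g (L p.1)| ∂((convPow F n).prod F) ≤ 1 / √((n : ℝ) + 1) := by
  have hgm := hg.measurable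
  have hsm := measurable_realSign
  have hsign0 : ∫ y, Real.sign (L y) ∂F = 0 := by
    have := integral_neg_eq_self (fun y => Real.sign (L y)) F
    simp only [map_neg, Real.sign_neg, integral_neg] at this
    linarith
  refine le_of_eq_of_le (integral_prod_eq_of_symmetrization_eq _ _ ?_ ?_ fun a y => ?_)
    (integral_mul_prod_convPow_le F n (hgm.comp hL) (hsm.comp hL) (fun _ => hg1 _)
      (fun _ => abs_realSign_le_one _) hsign0)
  · refine .of_bound (by fun_prop : Measurable _).aestronglyMeasurable (1 + 1)
      (.of_forall fun p => ?_)
    rw [Real.norm_eq_abs, abs_abs]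
    exact (abs_sub _ _).trans (add_le_add (hg1 _) (hg1 _))
  · refine .of_bound (Measurable.aestronglyMeasurable (by fun_prop)) 1 (.of_forall fun p => ?_)
    rw [norm_mul]
    exact mul_le_one₀ (hg1 _) (norm_nonneg _) (abs_realSign_le_one _)
  · simpa only [map_add, map_neg, Function.comp_apply]
      using abs_add_sub_add_abs_sub_sub hg (L a) (L y)

end Crossing

section Orthant

variable {d : ℕ}

/-- The closed lower orthant with vertex `x`: its measure under `μ` is the value at `x` of the
distribution function of `μ`. -/
def orthant (x : Euc d) : Set (Euc d) := {y | ∀ i, y i ≤ x i}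

lemma measurableSet_orthant (x : Euc d) : MeasurableSet (orthant x) := by
  simp only [orthant, Set.ofPred_forall]
  exact .iInter fun i => measurableSet_le (by fun_prop) measurable_const

lemma preimage_add_orthant (a x : Euc d) : (a + ·) ⁻¹' orthant x = orthant (x - a) := by
  ext y
  simp [orthant, le_sub_iff_add_le']

lemma abs_indicator_orthant_sub_le (x a b : Euc d) :
    |(orthant x).indicator (1 : Euc d → ℝ) a - (orthant x).indicator 1 b| ≤
      ∑ i, |(Set.Ioi (x i)).indicator (1 : ℝ → ℝ) (a i) - (Set.Ioi (x i)).indicator 1 (b i)| := by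
  wlog hab : b ∈ orthant x ∧ a ∉ orthant x generalizing a b
  · by_cases ha : a ∈ orthant x <;> by_cases hb : b ∈ orthant x
    · simpa [ha, hb] using Finset.sum_nonneg fun i _ => abs_nonneg _
    · simpa only [abs_sub_comm] using this b a ⟨ha, hb⟩
    · exact absurd ⟨hb, ha⟩ hab
    · simpa [ha, hb] using Finset.sum_nonneg fun i _ => abs_nonneg _
  obtain ⟨hb, ha⟩ := hab
  obtain ⟨i, hi⟩ : ∃ i, x i < a i := by simpa [orthant] using ha
  refine le_of_eq_of_le ?_ (Finset.single_le_sum (fun i _ => abs_nonneg _) (Finset.mem_univ i))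
  simp [ha, hb, hi, (hb i).not_gt]

end Orthant

lemma measureReal_convPow_succ_sub {α : Type*} [MeasurableSpace α] [AddMonoid α]
    [MeasurableAdd₂ α] (F : Measure α) [IsProbabilityMeasure F] (n : ℕ) {B : Set α}
    (hB : MeasurableSet B) :
    (convPow F (n + 1)).real B - (convPow F n).real B =
      ∫ p, B.indicator 1 (p.1 + p.2) - B.indicator 1 p.1 ∂((convPow F n).prod F) := by
  have hχ : Measurable (B.indicator (1 : α → ℝ)) := measurable_one.indicator hB
  have hχ1 (y : α) : ‖B.indicator (1 : α → ℝ) y‖ ≤ 1 :=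
    (norm_indicator_le_norm_self _ _).trans_eq norm_one
  rw [integral_sub]
  · congr 1
    · rw [← integral_indicator_one hB, convPow_succ, Measure.conv,
        integral_map (by fun_prop) hχ.aestronglyMeasurable]
    · rw [← integral_indicator_one hB]
      exact (measurePreserving_fst.hasLaw.integral_comp hχ.aestronglyMeasurable).symm
  · exact .of_bound (hχ.comp measurable_add).aestronglyMeasurable 1 (.of_forall fun p => hχ1 _)
  · exact .of_bound (hχ.comp measurable_fst).aestronglyMeasurable 1 (.of_forall fun p => hχ1 _)

lemma abs_convPow_succ_sub_le {d : ℕ} (F : Measure (Euc d)) [IsProbabilityMeasure F]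
    [F.IsNegInvariant] (n : ℕ) (x : Euc d) :
    |(convPow F (n + 1)).real (orthant x) - (convPow F n).real (orthant x)| ≤
      d / √((n : ℝ) + 1) := by
  set Q := (convPow F n).prod F
  set χ : Euc d → ℝ := (orthant x).indicator 1
  set g : Fin d → ℝ → ℝ := fun i => (Set.Ioi (x i)).indicator 1
  have hmono (i : Fin d) : Monotone (g i) := fun s t hst => by
    by_cases hs : x i < s
    · simp [g, hs, hs.trans_le hst]
    · simpa [g, hs] using Set.indicator_nonneg (f := 1) (fun _ _ => zero_le_one) t
  have hg1 (i : Fin d) (y : ℝ) : |g i y| ≤ 1 :=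
    (norm_indicator_le_norm_self (1 : ℝ → ℝ) y).trans_eq norm_one
  have hint (i : Fin d) : Integrable (fun p => |g i ((p.1 + p.2) i) - g i (p.1 i)|) Q := by
    have hgm := (hmono i).measurable
    refine .of_bound (by fun_prop : Measurable _).aestronglyMeasurable (1 + 1)
      (.of_forall fun p => ?_)
    rw [Real.norm_eq_abs, abs_abs]
    exact (abs_sub _ _).trans (add_le_add (hg1 _ _) (hg1 _ _))
  rw [measureReal_convPow_succ_sub F n (measurableSet_orthant x)]
  calc |∫ p, χ (p.1 + p.2) - χ p.1 ∂Q| ≤ ∫ p, |χ (p.1 + p.2) - χ p.1| ∂Q :=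
        abs_integral_le_integral_abs
    _ ≤ ∫ p, ∑ i, |g i ((p.1 + p.2) i) - g i (p.1 i)| ∂Q :=
        integral_mono_of_nonneg (.of_forall fun _ => abs_nonneg _)
          (integrable_finsetSum _ fun i _ => hint i)
          (.of_forall fun p => abs_indicator_orthant_sub_le x _ _)
    _ = ∑ i, ∫ p, |g i ((p.1 + p.2) i) - g i (p.1 i)| ∂Q :=
        integral_finsetSum _ fun i _ => hint i
    _ ≤ ∑ _i : Fin d, 1 / √((n : ℝ) + 1) := Finset.sum_le_sum fun i _ =>
        integral_abs_add_sub_le F n (L := (EuclideanSpace.proj i : Euc d →L[ℝ] ℝ).toAddMonoidHom)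
          (EuclideanSpace.proj i : Euc d →L[ℝ] ℝ).measurable (hmono i) (hg1 i)
    _ = d / √((n : ℝ) + 1) := by simp [div_eq_mul_inv]

section FwdDiff

lemma fwdDiff_iter_succ_apply {M G : Type*} [AddCommMonoid M] [AddCommGroup G] (h : M) (f : M → G)
    (r : ℕ) (t : M) : Δ_[h] ^[r + 1] f t = Δ_[h] ^[r] f (t + h) - Δ_[h] ^[r] f t := by
  rw [Function.iterate_succ_apply', fwdDiff]

lemma fwdDiff_iter_comp {M M' G : Type*} [AddCommMonoid M] [AddCommMonoid M'] [AddCommGroup G]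
    {φ : M → M'} {h : M} {h' : M'} (hφ : ∀ t, φ (t + h) = φ t + h') (f : M' → G) (r : ℕ) (t : M) :
    Δ_[h] ^[r] (fun t => f (φ t)) t = Δ_[h'] ^[r] f (φ t) := by
  induction r generalizing t with
  | zero => rfl
  | succ r ih => rw [fwdDiff_iter_succ_apply, fwdDiff_iter_succ_apply, ih, ih, hφ]

lemma map_fwdDiff_iter {M G G' : Type*} [AddCommMonoid M] [AddCommGroup G] [AddCommGroup G']
    (φ : G →+ G') (h : M) (f : M → G) (r : ℕ) (t : M) :
    φ (Δ_[h] ^[r] f t) = Δ_[h] ^[r] (fun t => φ (f t)) t := by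
  induction r generalizing t with
  | zero => rfl
  | succ r ih => rw [fwdDiff_iter_succ_apply, fwdDiff_iter_succ_apply, map_sub, ih, ih]

lemma fwdDiff_iter_pow {R : Type*} [Ring R] (q : R) (h r t : ℕ) :
    Δ_[h] ^[r] (fun t => q ^ t) t = (q ^ h - 1) ^ r * q ^ t :=
  fwdDiff_addChar_eq ⟨fun t => q ^ t, pow_zero q, pow_add q⟩ t h r

section Normed

variable {M E : Type*} [AddCommMonoid M] [NormedAddCommGroup E]

lemma norm_fwdDiff_iter_le {f : M → E} {h : M} {B : ℝ} (r : ℕ) {t : M}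
    (hf : ∀ j ≤ r, ‖f (t + j • h)‖ ≤ B) : ‖Δ_[h] ^[r] f t‖ ≤ 2 ^ r * B := by
  induction r generalizing t with
  | zero => simpa using hf 0 le_rfl
  | succ r ih =>
    have hshift : ‖Δ_[h] ^[r] f (t + h)‖ ≤ 2 ^ r * B := ih fun j hj => by
      simpa only [add_assoc, succ_nsmul'] using hf (j + 1) (Nat.succ_le_succ hj)
    rw [fwdDiff_iter_succ_apply, pow_succ, mul_two, add_mul]
    exact norm_sub_le_of_le hshift (ih fun j hj => hf j (hj.trans r.le_succ))

lemma fwdDiff_iter_congr {f g : M → E} {h t : M} (r : ℕ)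
    (hfg : ∀ j ≤ r, f (t + j • h) = g (t + j • h)) : Δ_[h] ^[r] f t = Δ_[h] ^[r] g t := by
  simp only [fwdDiff_iter_eq_sum_shift]
  exact Finset.sum_congr rfl fun j hj => by
    rw [hfg j (Nat.lt_succ_iff.1 (Finset.mem_range.1 hj))]

lemma fwdDiff_iter_integral [NormedSpace ℝ E] {Ω : Type*} [MeasurableSpace Ω] {μ : Measure Ω}
    {f : Ω → M → E} (hf : ∀ t, Integrable (fun ω => f ω t) μ) (h : M) (r : ℕ) (t : M) :
    Δ_[h] ^[r] (fun t => ∫ ω, f ω t ∂μ) t = ∫ ω, Δ_[h] ^[r] (f ω) t ∂μ := by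
  simp only [fwdDiff_iter_eq_sum_shift, ← Int.cast_smul_eq_zsmul ℝ]
  rw [integral_finsetSum _ fun j _ => (hf (t + j • h)).fun_smul (_ : ℝ)]
  exact Finset.sum_congr rfl fun j _ => (integral_smul _ _).symm

lemma norm_fwdDiff_iter_integral_le [NormedSpace ℝ E] {Ω : Type*} [MeasurableSpace Ω]
    {μ : Measure Ω} [IsProbabilityMeasure μ] {f : Ω → M → E}
    (hf : ∀ t, Integrable (fun ω => f ω t) μ) {h : M} {r : ℕ} {t : M} {B : ℝ}
    (hB : ∀ ω, ‖Δ_[h] ^[r] (f ω) t‖ ≤ B) :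
    ‖Δ_[h] ^[r] (fun t => ∫ ω, f ω t ∂μ) t‖ ≤ B := by
  rw [fwdDiff_iter_integral hf]
  refine (norm_integral_le_of_norm_le_const (.of_forall hB)).trans_eq ?_
  rw [probReal_univ, mul_one]

lemma fwdDiff_two_nsmul (h : M) (f : M → E) :
    Δ_[2 • h] f = 2 • Δ_[h] f + Δ_[h] ^[2] f := by
  ext t
  simp only [fwdDiff, Function.iterate_succ, Function.iterate_zero, Function.comp_apply, id,
    Pi.add_apply, two_nsmul, add_assoc]
  abel

lemma norm_fwdDiff_two_nsmul_iter_le {h : M} (r : ℕ) {f : M → E} {B : ℝ}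
    (hf : ∀ t, ‖Δ_[h] ^[r] f t‖ ≤ B) (t : M) : ‖Δ_[2 • h] ^[r] f t‖ ≤ 2 ^ r * B := by
  induction r generalizing f B with
  | zero => simpa using hf t
  | succ r ih =>
    rw [Function.iterate_succ_apply, pow_succ, mul_assoc]
    refine ih fun t => ?_
    have hsplit : Δ_[2 • h] f = (fun t => Δ_[h] f (t + h)) + Δ_[h] f := by
      ext t
      simp [fwdDiff, two_nsmul, add_assoc]
    rw [hsplit, fwdDiff_iter_add, two_mul]
    exact norm_add_le_of_le ((congrArg _ (fwdDiff_iter_comp_add h (Δ_[h] f) h r t)).trans_le (hf _))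
      (hf t)

variable [NormedSpace ℝ E]

lemma norm_fwdDiff_iter_le_of_two_nsmul {h : M} (r : ℕ) {f : M → E} {B : ℝ}
    (hf : ∀ t, ‖Δ_[h] ^[r + 1] f t‖ ≤ B) (t : M) :
    ‖Δ_[h] ^[r] f t‖ ≤ 2⁻¹ ^ r * ‖Δ_[2 • h] ^[r] f t‖ + r / 2 * B := by
  induction r generalizing f with
  | zero => simp
  | succ r ih =>
    have hIH := ih (f := Δ_[h] f) hf
    have hsecond : ‖Δ_[2 • h] ^[r] (Δ_[h] ^[2] f) t‖ ≤ 2 ^ r * B :=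
      norm_fwdDiff_two_nsmul_iter_le r (fun t => by
        simpa only [← Function.iterate_add_apply] using hf t) t
    have hhalf : 2 * ‖Δ_[2 • h] ^[r] (Δ_[h] f) t‖ ≤ ‖Δ_[2 • h] ^[r + 1] f t‖ + 2 ^ r * B := by
      have hsplit : Δ_[2 • h] ^[r + 1] f t =
          (2 : ℝ) • Δ_[2 • h] ^[r] (Δ_[h] f) t + Δ_[2 • h] ^[r] (Δ_[h] ^[2] f) t := by
        rw [Function.iterate_succ_apply, fwdDiff_two_nsmul, fwdDiff_iter_add,
          fwdDiff_iter_const_smul]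
        simp [two_smul]
      have hnorm : ‖(2 : ℝ) • Δ_[2 • h] ^[r] (Δ_[h] f) t‖ = 2 * ‖Δ_[2 • h] ^[r] (Δ_[h] f) t‖ := by
        rw [norm_smul, Real.norm_two]
      linarith [norm_le_add_norm_add ((2 : ℝ) • Δ_[2 • h] ^[r] (Δ_[h] f) t)
        (Δ_[2 • h] ^[r] (Δ_[h] ^[2] f) t), congrArg norm hsplit]
    calc ‖Δ_[h] ^[r + 1] f t‖
        ≤ 2⁻¹ ^ (r + 1) * (2 * ‖Δ_[2 • h] ^[r] (Δ_[h] f) t‖) + r / 2 * B := by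
          rw [Function.iterate_succ_apply]
          exact hIH.trans_eq (by ring)
      _ ≤ 2⁻¹ ^ (r + 1) * (‖Δ_[2 • h] ^[r + 1] f t‖ + 2 ^ r * B) + r / 2 * B := by gcongr
      _ = 2⁻¹ ^ (r + 1) * ‖Δ_[2 • h] ^[r + 1] f t‖ + (r + 1 : ℕ) / 2 * B := by
          have : (2⁻¹ : ℝ) ^ r * 2 ^ r = 1 := by rw [← mul_pow]; norm_num
          push_cast
          linear_combination B / 2 * this

end Normed

end FwdDiff

section Marchaud

lemma doubling_induction {p : ℕ → Prop} {n : ℕ} (hlarge : ∀ s, n ≤ s → p s)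
    (hdouble : ∀ s, 0 < s → s < n → p (2 * s) → p s) {s : ℕ} (hs : 0 < s) : p s := by
  induction hk : n - s using Nat.strong_induction_on generalizing s with
  | _ k ih =>
    rcases le_or_gt n s with hns | hns
    · exact hlarge s hns
    · exact hdouble s hs hns (ih (n - 2 * s) (by omega) (by omega) rfl)

variable {E : Type*} [NormedAddCommGroup E] [NormedSpace ℝ E] {n : ℕ} {f : ℕ → E} {C γ : ℝ}

lemma norm_fwdDiff_iter_le_rpow_of_succ (hn : 0 < n) (hf : ∀ t, ‖f t‖ ≤ 1) (hC : 0 ≤ C)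
    (hγ0 : 0 ≤ γ) (hγ : γ < 2) {r : ℕ} (hr : 2 ≤ r)
    (h : ∀ s, 0 < s → ∀ t, ‖Δ_[s] ^[r + 1] f t‖ ≤ C * (s / n : ℝ) ^ γ)
    {s : ℕ} (hs : 0 < s) (t : ℕ) :
    ‖Δ_[s] ^[r] f t‖ ≤ (2 ^ r + r / 2 * C / (1 - 2 ^ (γ - 2))) * (s / n : ℝ) ^ γ := by
  have hn' : (0 : ℝ) < n := Nat.cast_pos.2 hn
  have hθ : (0 : ℝ) < 1 - 2 ^ (γ - 2) :=
    sub_pos.2 (Real.rpow_lt_one_of_one_lt_of_neg one_lt_two (by linarith))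
  set A : ℝ := 2 ^ r + r / 2 * C / (1 - 2 ^ (γ - 2)) with hA
  have hCA : r / 2 * C ≤ (1 - 2 ^ (γ - 2)) * A := by
    rw [hA, mul_add, mul_div_cancel₀ _ hθ.ne']
    exact le_add_of_nonneg_left (by positivity)
  refine doubling_induction (p := fun s => ‖Δ_[s] ^[r] f t‖ ≤ A * (s / n : ℝ) ^ γ) (n := n)
    (fun s hns => ?_) (fun s hs _ hdouble => ?_) hs
  · have hw : 1 ≤ (s / n : ℝ) := (one_le_div hn').2 (Nat.cast_le.2 hns)
    calc ‖Δ_[s] ^[r] f t‖ ≤ 2 ^ r * 1 := norm_fwdDiff_iter_le r fun _ _ => hf _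
      _ ≤ A * (s / n : ℝ) ^ γ :=
        mul_le_mul (le_add_of_nonneg_right (by positivity)) (Real.one_le_rpow hw hγ0)
          zero_le_one (by positivity)
  · have hpow : (2⁻¹ : ℝ) ^ r * 2 ^ γ ≤ 2 ^ (γ - 2) := by
      rw [Real.rpow_sub two_pos, Real.rpow_two, div_eq_inv_mul, ← inv_pow]
      gcongr ?_ * _
      exact pow_le_pow_of_le_one (by norm_num) (by norm_num) hr
    have hrpow : ((2 * s : ℕ) / n : ℝ) ^ γ = 2 ^ γ * (s / n : ℝ) ^ γ := by
      rw [Nat.cast_mul, mul_div_assoc, Real.mul_rpow (by norm_num) (by positivity), Nat.cast_two]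
    calc ‖Δ_[s] ^[r] f t‖
        ≤ 2⁻¹ ^ r * (A * ((2 * s : ℕ) / n : ℝ) ^ γ) + r / 2 * (C * (s / n : ℝ) ^ γ) := by
          refine (norm_fwdDiff_iter_le_of_two_nsmul r (h s hs) t).trans ?_
          gcongr
          exact hdouble
      _ = (2⁻¹ ^ r * 2 ^ γ * A + r / 2 * C) * (s / n : ℝ) ^ γ := by rw [hrpow]; ring
      _ ≤ (2 ^ (γ - 2) * A + (1 - 2 ^ (γ - 2)) * A) * (s / n : ℝ) ^ γ := by gcongr
      _ = A * (s / n : ℝ) ^ γ := by ring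

lemma norm_fwdDiff_le_linear_of_two (hn : 0 < n) (hf : ∀ t, ‖f t‖ ≤ 1) (hC : 0 ≤ C) (hγ : 1 < γ)
    (h : ∀ s, 0 < s → ∀ t, ‖Δ_[s] ^[2] f t‖ ≤ C * (s / n : ℝ) ^ γ) {s : ℕ} (hs : 0 < s) (t : ℕ) :
    ‖Δ_[s] f t‖ ≤ (2 + 2 ^ (γ - 1) * (C / (2 ^ γ - 2))) * (s / n : ℝ) := by
  have hn' : (0 : ℝ) < n := Nat.cast_pos.2 hn
  have hθ : (0 : ℝ) < 2 ^ γ - 2 :=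
    sub_pos.2 (Real.self_lt_rpow_of_one_lt one_lt_two hγ)
  set B : ℝ := C / (2 ^ γ - 2)
  set A : ℝ := 2 + 2 ^ (γ - 1) * B
  have hB0 : 0 ≤ B := div_nonneg hC hθ.le
  have htriv (s : ℕ) : ‖Δ_[s] f t‖ ≤ 2 := by
    simpa using norm_fwdDiff_iter_le (h := s) (t := t) 1 fun _ _ => hf _
  rcases le_or_gt n s with hns | hns
  · have hw : 1 ≤ (s / n : ℝ) := (one_le_div hn').2 (Nat.cast_le.2 hns)
    refine (htriv s).trans ((le_mul_of_one_le_right zero_le_two hw).trans ?_)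
    gcongr
    exact le_add_of_nonneg_right (by positivity)
  -- The negative term absorbs the second-order errors, which a bound `A * (s / n)` cannot do.
  suffices ‖Δ_[s] f t‖ ≤ A * (s / n : ℝ) - B * (s / n : ℝ) ^ γ from
    this.trans (sub_le_self _ (by positivity))
  refine doubling_induction (p := fun s => s < 2 * n →
    ‖Δ_[s] f t‖ ≤ A * (s / n : ℝ) - B * (s / n : ℝ) ^ γ) (n := n)
    (fun s hns hsn => ?_) (fun s hs hsn hdouble _ => ?_) hs (by omega)
  · have hw1 : 1 ≤ (s / n : ℝ) := (one_le_div hn').2 (Nat.cast_le.2 hns)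
    have hw2 : (s / n : ℝ) ≤ 2 := (div_le_iff₀ hn').2 (by exact_mod_cast hsn.le)
    have hpow : (s / n : ℝ) ^ γ ≤ 2 ^ (γ - 1) * (s / n : ℝ) := by
      rw [← sub_add_cancel γ 1, Real.rpow_add_one (by positivity), add_sub_cancel_right]
      gcongr
    have := mul_le_mul_of_nonneg_left hpow hB0
    linarith [htriv s]
  · have hrpow : ((2 * s : ℕ) / n : ℝ) ^ γ = 2 ^ γ * (s / n : ℝ) ^ γ := by
      rw [Nat.cast_mul, mul_div_assoc, Real.mul_rpow (by norm_num) (by positivity), Nat.cast_two]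
    have hCB : C = (2 ^ γ - 2) * B := (mul_div_cancel₀ C hθ.ne').symm
    have hstep := norm_fwdDiff_iter_le_of_two_nsmul 1 (h s hs) t
    have hIH := hdouble (by omega)
    rw [hrpow, Nat.cast_mul, Nat.cast_two, mul_div_assoc] at hIH
    simp only [Function.iterate_one, pow_one, smul_eq_mul, Nat.cast_one] at hstep
    rw [hCB] at hstep
    linarith

theorem exists_norm_fwdDiff_le_linear (hC : 0 ≤ C) (hγ1 : 1 < γ) (hγ2 : γ < 2) (r : ℕ) :
    ∃ C' : ℝ, 0 ≤ C' ∧ ∀ n : ℕ, 0 < n → ∀ f : ℕ → E, (∀ t, ‖f t‖ ≤ 1) →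
      (∀ s, 0 < s → ∀ t, ‖Δ_[s] ^[r + 2] f t‖ ≤ C * (s / n : ℝ) ^ γ) →
        ∀ s, 0 < s → ∀ t, ‖Δ_[s] f t‖ ≤ C' * (s / n : ℝ) := by
  induction r generalizing C with
  | zero =>
    have hθ : (0 : ℝ) < 2 ^ γ - 2 := sub_pos.2 (Real.self_lt_rpow_of_one_lt one_lt_two hγ1)
    exact ⟨_, by positivity, fun n hn f hf h s hs t =>
      norm_fwdDiff_le_linear_of_two hn hf hC hγ1 h hs t⟩
  | succ r ih =>
    have hθ : (0 : ℝ) < 1 - 2 ^ (γ - 2) :=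
      sub_pos.2 (Real.rpow_lt_one_of_one_lt_of_neg one_lt_two (by linarith))
    obtain ⟨C', hC', hlin⟩ :=
      ih (C := 2 ^ (r + 2) + (r + 2 : ℕ) / 2 * C / (1 - 2 ^ (γ - 2))) (by positivity)
    exact ⟨C', hC', fun n hn f hf h => hlin n hn f hf fun s hs t =>
      norm_fwdDiff_iter_le_rpow_of_succ hn hf hC (by linarith) hγ2 (by omega) h hs t⟩

end Marchaud

section SymmEmpirical

lemma measurePreserving_equiv_uniformOn_univ {Ω : Type*} [MeasurableSpace Ω] [Finite Ω]
    [MeasurableSingletonClass Ω] (e : Ω ≃ Ω) :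
    MeasurePreserving e (uniformOn Set.univ) (uniformOn Set.univ) := by
  have := Fintype.ofFinite Ω
  refine ⟨measurable_of_finite e, Measure.ext fun s hs => ?_⟩
  rw [Measure.map_apply (measurable_of_finite e) hs, uniformOn_univ, uniformOn_univ,
    ← e.image_symm_eq_preimage, Measure.count_injective_image e.symm.injective]

section Collision

variable {Ω κ : Type*} [MeasurableSpace Ω] [DiscreteMeasurableSpace Ω] [Countable Ω]
  {P : Measure Ω} [IsProbabilityMeasure P] {f : Ω → κ} {b : ℝ}

lemma measureReal_prod_eq_le (hf : ∀ c, P.real {p | f p = c} ≤ b) :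
    (P.prod P).real {q | f q.1 = f q.2} ≤ b := by
  rw [measureReal_prod_eq_integral _ _ (.of_discrete)]
  refine (integral_mono (.of_bound (Measurable.of_discrete.aestronglyMeasurable) 1
    (.of_forall fun _ => norm_measureReal_le_one _ _)) (integrable_const b) fun q => ?_).trans_eq
      (by simp)
  simpa only [Set.preimage_ofPred_eq, eq_comm] using hf (f q)

lemma measureReal_pi_not_injective_le (hf : ∀ c, P.real {p | f p = c} ≤ b) (t : ℕ) :
    (Measure.pi fun _ : Fin t => P).real {a | ¬ Function.Injective fun j => f (a j)} ≤
      t ^ 2 * b := by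
  have hb : 0 ≤ b := measureReal_nonneg.trans (measureReal_prod_eq_le hf)
  have hcover : {a : Fin t → Ω | ¬ Function.Injective fun j => f (a j)} ⊆
      ⋃ q ∈ (Finset.univ : Finset (Fin t)).offDiag, {a | f (a q.1) = f (a q.2)} := fun a ha => by
    obtain ⟨i, j, heq, hij⟩ := Function.not_injective_iff.1 ha
    exact Set.mem_biUnion (x := (i, j)) (by simpa using hij) heq
  have hpair (q : Fin t × Fin t) (hq : q ∈ Finset.univ.offDiag) :
      (Measure.pi fun _ : Fin t => P).real {a | f (a q.1) = f (a q.2)} ≤ b := by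
    refine le_of_eq_of_le ?_ (measureReal_prod_eq_le hf)
    rw [← map_prodMk_eval_pi (fun _ : Fin t => P) (Finset.mem_offDiag.1 hq).2.2,
      map_measureReal_apply (by fun_prop) .of_discrete]
    rfl
  calc _ ≤ ∑ _q ∈ (Finset.univ : Finset (Fin t)).offDiag, b :=
        (measureReal_mono hcover (measure_ne_top _ _)).trans
          ((measureReal_biUnion_finset_le _ _).trans (Finset.sum_le_sum hpair))
    _ ≤ t ^ 2 * b := by
        rw [Finset.sum_const, nsmul_eq_mul, sq]
        gcongr
        exact_mod_cast (Finset.offDiag_card _).trans_le (by simp)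

end Collision

section SignedSample

variable {ι E : Type*} [MeasurableSpace E] [AddCommGroup E] [MeasurableNeg E]

/-- The sample point `ω p.1`, reflected if `p.2 = false`. -/
def signedSample {E : Type*} [Neg E] (ω : ι → E) (p : ι × Bool) : E :=
  bif p.2 then ω p.1 else -ω p.1

lemma measurable_signedSample (p : ι × Bool) :
    Measurable fun ω : ι → E => signedSample ω p := by
  cases h : p.2 <;> simp only [signedSample, h, cond_true, cond_false] <;> fun_prop

variable [Fintype ι] (F : Measure E) [IsProbabilityMeasure F] [F.IsNegInvariant]

lemma map_signedSample_pi (p : ι × Bool) :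
    (Measure.pi fun _ : ι => F).map (fun ω => signedSample ω p) = F := by
  have heval := measurePreserving_eval (fun _ : ι => F) p.1
  cases h : p.2 <;> simp only [signedSample, h, cond_true, cond_false]
  · exact ((Measure.measurePreserving_neg F).comp heval).map_eq
  · exact heval.map_eq

lemma map_sum_signedSample_pi [MeasurableAdd₂ E] {t : ℕ} {a : Fin t → ι × Bool}
    (ha : Function.Injective fun j => (a j).1) :
    (Measure.pi fun _ : ι => F).map (fun ω => ∑ j, signedSample ω (a j)) = convPow F t := by
  have hind : iIndepFun (fun j (ω : ι → E) => signedSample ω (a j)) (Measure.pi fun _ : ι => F) :=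
    ((iIndepFun_eval_pi fun _ : ι => F).precomp ha).comp
      (fun j y => bif (a j).2 then y else -y) fun j => by
        cases h : (a j).2 <;> simp only [cond_true, cond_false] <;> fun_prop
  simpa using map_sum_eq_convPow hind (fun j => measurable_signedSample (a j))
    (fun j => map_signedSample_pi F (a j)) Finset.univ

end SignedSample

variable {ι E : Type*} [MeasurableSpace ι] [MeasurableSpace E]

/-- The uniform distribution on the points `± ω i`, the symmetric counterpart of the empirical
measure of the sample `ω`. -/
def symmEmpirical [Neg E] (ω : ι → E) : Measure E :=
  (uniformOn (Set.univ : Set (ι × Bool))).map (signedSample ω)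

variable [DiscreteMeasurableSpace ι]

instance isProbabilityMeasure_symmEmpirical [Neg E] [Finite ι] [Nonempty ι] (ω : ι → E) :
    IsProbabilityMeasure (symmEmpirical ω) :=
  Measure.isProbabilityMeasure_map Measurable.of_discrete.aemeasurable

instance isNegInvariant_symmEmpirical [AddGroup E] [MeasurableNeg E] [Finite ι]
    (ω : ι → E) : (symmEmpirical ω).IsNegInvariant := by
  have hflip := measurePreserving_equiv_uniformOn_univ ((Equiv.refl ι).prodCongr Equiv.boolNot)
  refine ⟨(Measure.map_map measurable_neg .of_discrete).trans ?_⟩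
  rw [symmEmpirical, ← hflip.map_eq, Measure.map_map .of_discrete .of_discrete, hflip.map_eq]
  congr 1
  ext ⟨i, b⟩
  cases b <;> simp [signedSample]

variable [AddCommGroup E] [MeasurableAdd₂ E]

lemma measureReal_convPow_symmEmpirical [Finite ι] [Nonempty ι] (ω : ι → E) (t : ℕ) {B : Set E}
    (hB : MeasurableSet B) :
    (convPow (symmEmpirical ω) t).real B =
      (Measure.pi fun _ : Fin t => uniformOn (Set.univ : Set (ι × Bool))).real
        {a | ∑ j, signedSample ω (a j) ∈ B} := by
  rw [symmEmpirical, convPow_map _ .of_discrete, map_measureReal_apply .of_discrete hB]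
  rfl

variable [MeasurableNeg E]

lemma measurableSet_sum_signedSample_mem [Finite ι] (t : ℕ) {B : Set E} (hB : MeasurableSet B) :
    MeasurableSet {q : (ι → E) × (Fin t → ι × Bool) | ∑ j, signedSample q.1 (q.2 j) ∈ B} :=
  measurable_from_prod_countable_left
    (fun a => Finset.measurable_fun_sum _ fun j _ => measurable_signedSample (a j)) hB

variable [Fintype ι] [Nonempty ι]

lemma uniformOn_univ_real_fst_eq (i : ι) :
    (uniformOn (Set.univ : Set (ι × Bool))).real {p | p.1 = i} = 1 / Fintype.card ι := by
  have hset : {p : ι × Bool | p.1 = i} =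
      ↑(Finset.univ.map ⟨(i, ·), Prod.mk_right_injective i⟩ : Finset (ι × Bool)) := by
    ext ⟨j, b⟩
    simp [eq_comm]
  rw [measureReal_def, uniformOn_univ, hset, Measure.count_apply_finset, Finset.card_map,
    Finset.card_univ, Fintype.card_prod, Fintype.card_bool, ENNReal.toReal_div]
  simp only [ENNReal.toReal_natCast]
  push_cast
  field_simp

variable (F : Measure E) [IsProbabilityMeasure F]

lemma integrable_measureReal_convPow_symmEmpirical (t : ℕ) {B : Set E} (hB : MeasurableSet B) :
    Integrable (fun ω : ι → E => (convPow (symmEmpirical ω) t).real B)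
      (Measure.pi fun _ : ι => F) := by
  simp only [measureReal_convPow_symmEmpirical _ t hB]
  exact integrable_measureReal_prodMk _ _ (measurableSet_sum_signedSample_mem t hB)

lemma integral_convPow_symmEmpirical (t : ℕ) {B : Set E} (hB : MeasurableSet B) :
    ∫ ω, (convPow (symmEmpirical ω) t).real B ∂(Measure.pi fun _ : ι => F) =
      ∫ a, ((Measure.pi fun _ : ι => F).map fun ω => ∑ j, signedSample ω (a j)).real B
        ∂(Measure.pi fun _ : Fin t => uniformOn (Set.univ : Set (ι × Bool))) := by
  set P := Measure.pi fun _ : ι => F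
  set U := Measure.pi fun _ : Fin t => uniformOn (Set.univ : Set (ι × Bool))
  have hS := measurableSet_sum_signedSample_mem (ι := ι) t hB
  have hswap := Measure.measurePreserving_swap (μ := U) (ν := P).measureReal_preimage
    hS.nullMeasurableSet
  rw [measureReal_prod_eq_integral _ _ hS,
    measureReal_prod_eq_integral _ _ (measurable_swap hS)] at hswap
  calc _ = ∫ ω, U.real {a | ∑ j, signedSample ω (a j) ∈ B} ∂P := by
        simp only [measureReal_convPow_symmEmpirical _ t hB, U]
    _ = ∫ a, P.real {ω | ∑ j, signedSample ω (a j) ∈ B} ∂U := hswap.symm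
    _ = _ := by
        congr with a
        rw [map_measureReal_apply (Finset.measurable_fun_sum _ fun j _ =>
          measurable_signedSample (a j)) hB]
        rfl

lemma abs_integral_convPow_symmEmpirical_sub_le [F.IsNegInvariant] (t : ℕ) {B : Set E}
    (hB : MeasurableSet B) :
    |∫ ω, (convPow (symmEmpirical ω) t).real B ∂(Measure.pi fun _ : ι => F) -
      (convPow F t).real B| ≤ t ^ 2 / Fintype.card ι := by
  set P := Measure.pi fun _ : ι => F
  set U := Measure.pi fun _ : Fin t => uniformOn (Set.univ : Set (ι × Bool))
  set D : Set (Fin t → ι × Bool) := {a | ¬ Function.Injective fun j => (a j).1}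
  set G : (Fin t → ι × Bool) → ℝ := fun a => (P.map fun ω => ∑ j, signedSample ω (a j)).real B
  have (a : Fin t → ι × Bool) :
      IsProbabilityMeasure (P.map fun ω => ∑ j, signedSample ω (a j)) :=
    Measure.isProbabilityMeasure_map (Finset.measurable_fun_sum _ fun j _ =>
      measurable_signedSample (a j)).aemeasurable
  have hG1 (a : Fin t → ι × Bool) : |G a - (convPow F t).real B| ≤ D.indicator 1 a := by
    by_cases ha : a ∈ D
    · rw [Set.indicator_of_mem ha]
      exact abs_sub_le_of_nonneg_of_le measureReal_nonneg measureReal_le_one measureReal_nonneg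
        measureReal_le_one
    · rw [Set.indicator_of_notMem ha, ← map_sum_signedSample_pi F (not_not.1 ha), sub_self,
        abs_zero]
  rw [integral_convPow_symmEmpirical F t hB]
  calc |∫ a, G a ∂U - (convPow F t).real B| = |∫ a, (G a - (convPow F t).real B) ∂U| := by
        rw [integral_sub (.of_finite) (integrable_const _), integral_const, probReal_univ, one_smul]
    _ ≤ ∫ a, D.indicator 1 a ∂U :=
        norm_integral_le_of_norm_le (f := fun a => G a - _) .of_finite (.of_forall hG1)
    _ = U.real D := integral_indicator_one .of_discrete
    _ ≤ t ^ 2 * (1 / Fintype.card ι) :=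
        measureReal_pi_not_injective_le (fun i => (uniformOn_univ_real_fst_eq i).le) t
    _ = t ^ 2 / Fintype.card ι := mul_one_div _ _

end SymmEmpirical

section IntComb

variable {ι A : Type*} [Fintype ι] [AddCommGroup A] {e : ι → A} {T : ℕ}

/-- The combinations of the family `e` with integer coefficients of absolute value at most `T`:
a generalized arithmetic progression in which all `t`-fold sums of the points `± e i`, `t ≤ T`,
take their values. -/
def intComb (e : ι → A) (T : ℕ) : Set A :=
  {v | ∃ c : ι → ℤ, (∀ i, |c i| ≤ T) ∧ ∑ i, c i • e i = v}

lemma intComb_mono {t : ℕ} (h : t ≤ T) : intComb e t ⊆ intComb e T :=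
  fun _ ⟨c, hc, hv⟩ => ⟨c, fun i => (hc i).trans (Nat.cast_le.2 h), hv⟩

lemma finite_intComb_and_ncard_le (e : ι → A) (T : ℕ) :
    (intComb e T).Finite ∧ (intComb e T).ncard ≤ (2 * T + 1) ^ Fintype.card ι := by
  classical
  set S : Finset A := (Fintype.piFinset fun _ : ι => Finset.Icc (-(T : ℤ)) T).image
    fun c => ∑ i, c i • e i
  have hsub : intComb e T ⊆ S := fun v ⟨c, hc, hv⟩ => by
    simpa [S] using ⟨c, ⟨fun i => (abs_le.1 (hc i)).1, fun i => (abs_le.1 (hc i)).2⟩, hv⟩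
  refine ⟨S.finite_toSet.subset hsub, ?_⟩
  calc (intComb e T).ncard ≤ S.card := by simpa using Set.ncard_le_ncard hsub S.finite_toSet
    _ ≤ (Fintype.piFinset fun _ : ι => Finset.Icc (-(T : ℤ)) T).card := Finset.card_image_le
    _ = (2 * T + 1) ^ Fintype.card ι := by
        rw [Fintype.card_piFinset, Finset.prod_const, Finset.card_univ, Int.card_Icc]
        congr 1
        omega

lemma sum_mem_intComb {κ : Type*} (s : Finset κ) {f : κ → A} (hf : ∀ k ∈ s, f k ∈ intComb e T) :
    ∑ k ∈ s, f k ∈ intComb e (s.card * T) := by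
  choose! c hc hf using hf
  refine ⟨fun i => ∑ k ∈ s, c k i, fun i => ?_, ?_⟩
  · calc |∑ k ∈ s, c k i| ≤ ∑ k ∈ s, |c k i| := Finset.abs_sum_le_sum_abs _ _
      _ ≤ s.card • (T : ℤ) := Finset.sum_le_card_nsmul _ _ _ fun k hk => hc k hk i
      _ = (s.card * T : ℕ) := by simp
  · simp only [Finset.sum_smul]
    rw [Finset.sum_comm, Finset.sum_congr rfl hf]

lemma map_mem_intComb {B : Type*} [AddCommGroup B] (f : A →+ B) {v : A} (hv : v ∈ intComb e T) :
    f v ∈ intComb (f ∘ e) T := by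
  obtain ⟨c, hc, rfl⟩ := hv
  exact ⟨c, hc, by simp⟩

lemma sub_mem_intComb_elim (hT : 1 ≤ T) (x : A) {v : A} (hv : v ∈ intComb e T) :
    x - v ∈ intComb (fun o : Option ι => o.elim x e) T := by
  obtain ⟨c, hc, rfl⟩ := hv
  refine ⟨fun o => o.elim 1 (-c), fun o => ?_, by simp [sub_eq_add_neg]⟩
  cases o with
  | none => simpa using hT
  | some i => simpa using hc i

lemma signedSample_mem_intComb (e : ι → A) (p : ι × Bool) : signedSample e p ∈ intComb e 1 := by
  classical
  refine ⟨Pi.single p.1 (bif p.2 then 1 else -1), fun i => ?_, ?_⟩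
  · by_cases hi : i = p.1
    · subst hi
      cases p.2 <;> simp
    · simp [hi]
  · rw [Fintype.sum_eq_single p.1 fun i hi => by simp [hi]]
    cases h : p.2 <;> simp [signedSample, h]

lemma ae_mem_intComb_convPow_symmEmpirical [MeasurableSpace ι] [DiscreteMeasurableSpace ι]
    [Nonempty ι] [MeasurableSpace A] [MeasurableSingletonClass A] [MeasurableNeg A]
    [MeasurableAdd₂ A] (ω : ι → A) (t : ℕ) :
    ∀ᵐ v ∂(convPow (symmEmpirical ω) t), v ∈ intComb ω t := by
  rw [symmEmpirical, convPow_map _ .of_discrete]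
  refine (ae_map_iff (p := (· ∈ intComb ω t)) Measurable.of_discrete.aemeasurable
    (finite_intComb_and_ncard_le ω t).1.measurableSet).2 (.of_forall fun a => ?_)
  simpa using sum_mem_intComb Finset.univ fun j _ => signedSample_mem_intComb ω (a j)

end IntComb

section ScaleCount

/-- A finite set of positive reals is lacunary if its elements at least double from one to the
next. -/
structure IsLacunary (Y : Finset ℝ) : Prop where
  pos : ∀ y ∈ Y, 0 < y
  two_mul_le : ∀ y ∈ Y, ∀ z ∈ Y, y < z → 2 * y ≤ z

namespace IsLacunary

variable {Y s t : Finset ℝ}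

lemma sum_lt (hY : IsLacunary Y) (hs : s ⊆ Y) {a : ℝ} (ha : a ∈ Y) (hsa : ∀ y ∈ s, y < a) :
    ∑ y ∈ s, y < a := by
  induction s using Finset.induction_on_max generalizing a with
  | empty => simpa using hY.pos a ha
  | insert m s hm ih =>
    obtain ⟨hmY, hsY⟩ := Finset.insert_subset_iff.1 hs
    have hlt : ∑ y ∈ s, y < m := ih hsY hmY hm
    have htwo : 2 * m ≤ a := hY.two_mul_le m hmY a ha (hsa m (Finset.mem_insert_self m s))
    rw [Finset.sum_insert fun h => lt_irrefl m (hm m h)]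
    linarith

lemma sum_lt_sum (hY : IsLacunary Y) (hs : s ⊆ Y) (ht : t ⊆ Y) (hst : toColex s < toColex t) :
    ∑ y ∈ s, y < ∑ y ∈ t, y := by
  obtain ⟨a, hat, has, hmax⟩ := Finset.Colex.toColex_lt_toColex_iff_exists_forall_lt.1 hst
  have hlt : ∑ y ∈ s \ t, y < a :=
    hY.sum_lt (Finset.sdiff_subset.trans hs) (ht hat) fun y hy =>
      hmax y (Finset.mem_sdiff.1 hy).1 (Finset.mem_sdiff.1 hy).2
  have hle : a ≤ ∑ y ∈ t \ s, y :=
    Finset.single_le_sum (f := fun y => y)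
      (fun y hy => (hY.pos y (ht (Finset.mem_sdiff.1 hy).1)).le) (Finset.mem_sdiff.2 ⟨hat, has⟩)
  have hdiff := Finset.sum_sdiff_sub_sum_sdiff (f := fun y : ℝ => y) (s₁ := s) (s₂ := t)
  linarith

lemma injOn_sum_powerset (hY : IsLacunary Y) :
    Set.InjOn (fun s : Finset ℝ => ∑ y ∈ s, y) Y.powerset := fun s hs t ht hst => by
  rw [Finset.mem_coe, Finset.mem_powerset] at hs ht
  by_contra hne
  rcases lt_or_gt_of_ne (toColex.injective.ne hne) with hlt | hlt
  · exact (hY.sum_lt_sum hs ht hlt).ne hst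
  · exact (hY.sum_lt_sum ht hs hlt).ne' hst

end IsLacunary

lemma le_of_two_pow_le_pow {p k t : ℕ} (ht : 1 ≤ t) (h : 2 ^ p ≤ (2 * (p * t) + 1) ^ k) :
    p ≤ 48 * k ^ 2 * t := by
  rcases p.eq_zero_or_pos with rfl | hp
  · exact Nat.zero_le _
  set X : ℝ := 2 * (p * t) + 1 with hX
  have hX0 : 0 < X := by positivity
  have hpt : (1 : ℝ) ≤ p * t := mod_cast Nat.mul_pos hp ht
  have hlogX : Real.log X ≤ 2 * √X := by
    have := Real.log_le_rpow_div hX0.le one_half_pos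
    rw [← Real.sqrt_eq_rpow] at this
    linarith
  have hlog : p * Real.log 2 ≤ k * Real.log X := by
    rw [← Real.log_pow, ← Real.log_pow]
    exact Real.log_le_log (by positivity) (by rw [hX]; exact_mod_cast h)
  have hhalf : (p : ℝ) / 2 ≤ p * Real.log 2 := by
    rw [div_eq_mul_inv]
    gcongr
    linarith [Real.log_two_gt_d9]
  have hsqrt : (p : ℝ) / 2 ≤ 2 * k * √X := by
    nlinarith [mul_le_mul_of_nonneg_left hlogX k.cast_nonneg]
  have hsq : (p : ℝ) * p ≤ p * (48 * k ^ 2 * t) := calc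
    (p : ℝ) * p = 4 * (p / 2) ^ 2 := by ring
    _ ≤ 4 * (2 * k * √X) ^ 2 := by gcongr
    _ = 16 * k ^ 2 * X := by rw [mul_pow, Real.sq_sqrt hX0.le]; ring
    _ ≤ 16 * k ^ 2 * (3 * (p * t)) := by gcongr; linarith
    _ = p * (48 * k ^ 2 * t) := by ring
  exact_mod_cast le_of_mul_le_mul_left hsq (Nat.cast_pos.2 hp)

variable {ι : Type*} [Fintype ι] {e : ι → ℝ} {T : ℕ} {Y : Finset ℝ}

-- The subset sums of a lacunary `Y` are distinct and lie in `intComb e (Y.card * T)`.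
lemma IsLacunary.card_le (hY : IsLacunary Y) (hT : 1 ≤ T) (hYe : ↑Y ⊆ intComb e T) :
    Y.card ≤ 48 * Fintype.card ι ^ 2 * T := by
  obtain ⟨hfin, hcard⟩ := finite_intComb_and_ncard_le e (Y.card * T)
  refine le_of_two_pow_le_pow hT (le_trans ?_ hcard)
  rw [← Finset.card_powerset, ← Set.ncard_coe_finset]
  refine Set.ncard_le_ncard_of_injOn _ (fun s hs => ?_) hY.injOn_sum_powerset hfin
  rw [Finset.mem_coe, Finset.mem_powerset] at hs
  exact intComb_mono (Nat.mul_le_mul_right T (Finset.card_le_card hs))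
    (sum_mem_intComb s fun y hy => hYe (hs hy))

lemma two_mul_le_of_log_add_two_le {y z : ℝ} (hz : 0 < z)
    (h : Int.log 2 y + 2 ≤ Int.log 2 z) : 2 * y ≤ z := calc
  2 * y ≤ 2 * (2 : ℝ) ^ (Int.log 2 y + 1) := by
    gcongr
    exact_mod_cast (Int.lt_zpow_succ_log_self one_lt_two y).le
  _ = (2 : ℝ) ^ (Int.log 2 y + 2) := by
    rw [← zpow_one_add₀ two_ne_zero]
    ring_nf
  _ ≤ (2 : ℝ) ^ Int.log 2 z := zpow_le_zpow_right₀ one_le_two h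
  _ ≤ z := mod_cast Int.zpow_log_le_self one_lt_two hz

-- Distinct scales of equal parity are two apart, so representatives of them are lacunary.
lemma card_filter_image_log_le (hT : 1 ≤ T) (hpos : ∀ y ∈ Y, 0 < y) (hYe : ↑Y ⊆ intComb e T)
    (q : ℤ) : {l ∈ Y.image (Int.log 2) | l % 2 = q}.card ≤ 48 * Fintype.card ι ^ 2 * T := by
  obtain ⟨Z, hZY, hinj, himage⟩ := Finset.exists_subset_injOn_image_eq_of_surjOn (f := Int.log 2)
    (Y : Set ℝ) {l ∈ Y.image (Int.log 2) | l % 2 = q} fun l hl => by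
      simpa using (Finset.mem_filter.1 (Finset.mem_coe.1 hl)).1
  have hparity : ∀ y ∈ Z, Int.log 2 y % 2 = q := fun y hy => by
    have hmem := Finset.mem_image_of_mem (Int.log 2) hy
    rw [himage] at hmem
    exact (Finset.mem_filter.1 hmem).2
  have hZpos : ∀ y ∈ Z, 0 < y := fun y hy => hpos y (hZY hy)
  rw [← himage, Finset.card_image_of_injOn hinj]
  refine IsLacunary.card_le ⟨hZpos, fun y hy z hz hyz => ?_⟩ hT (hZY.trans hYe)
  refine two_mul_le_of_log_add_two_le (hZpos z hz) ?_
  have hle : Int.log 2 y ≤ Int.log 2 z := Int.log_mono_right (hZpos y hy) hyz.le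
  have hne : Int.log 2 y ≠ Int.log 2 z := fun h => hyz.ne (hinj hy hz h)
  have := hparity y hy
  have := hparity z hz
  omega

lemma card_image_log_le (hT : 1 ≤ T) (hpos : ∀ y ∈ Y, 0 < y) (hYe : ↑Y ⊆ intComb e T) :
    (Y.image (Int.log 2)).card ≤ 96 * Fintype.card ι ^ 2 * T := by
  have hsplit : Y.image (Int.log 2) ⊆
      {l ∈ Y.image (Int.log 2) | l % 2 = 0} ∪ {l ∈ Y.image (Int.log 2) | l % 2 = 1} :=
    fun l hl => by
      rw [← Finset.filter_or, Finset.mem_filter]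
      exact ⟨hl, Int.emod_two_eq_zero_or_one l⟩
  have hcard := (Finset.card_le_card hsplit).trans (Finset.card_union_le _ _)
  have := card_filter_image_log_le hT hpos hYe 0
  have := card_filter_image_log_le hT hpos hYe 1
  linarith

end ScaleCount

section Bump

/-- A smooth function supported in `[1, 4]` whose dyadic rescalings form a partition of unity on
the positive half-line; it resolves the indicator of a half-line into dyadic scales. -/
def bump (y : ℝ) : ℝ :=
  Real.smoothTransition (y - 1) - Real.smoothTransition (y / 2 - 1)

variable {y : ℝ}

lemma contDiff_bump : ContDiff ℝ (⊤ : ℕ∞) bump :=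
  (Real.smoothTransition.contDiff.comp (by fun_prop)).sub
    (Real.smoothTransition.contDiff.comp (by fun_prop))

lemma bump_of_le_one (hy : y ≤ 1) : bump y = 0 := by
  rw [bump, Real.smoothTransition.zero_of_nonpos (by linarith),
    Real.smoothTransition.zero_of_nonpos (by linarith), sub_zero]

lemma bump_of_four_le (hy : 4 ≤ y) : bump y = 0 := by
  rw [bump, Real.smoothTransition.one_of_one_le (by linarith),
    Real.smoothTransition.one_of_one_le (by linarith), sub_self]

lemma bump_add_bump_two_mul (h₁ : 1 ≤ y) (h₂ : y ≤ 2) : bump y + bump (2 * y) = 1 := by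
  rw [bump, bump, Real.smoothTransition.zero_of_nonpos (x := y / 2 - 1) (by linarith),
    Real.smoothTransition.one_of_one_le (x := 2 * y - 1) (by linarith),
    mul_div_cancel_left₀ y two_ne_zero]
  ring

lemma abs_bump_le_one (y : ℝ) : |bump y| ≤ 1 :=
  abs_sub_le_of_nonneg_of_le (Real.smoothTransition.nonneg _) (Real.smoothTransition.le_one _)
    (Real.smoothTransition.nonneg _) (Real.smoothTransition.le_one _)

lemma bump_div_zpow_of_nonpos (hy : y ≤ 0) (l : ℤ) : bump (y / 2 ^ l) = 0 :=
  bump_of_le_one ((div_nonpos_of_nonpos_of_nonneg hy (by positivity)).trans zero_le_one)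

lemma two_zpow_log_le (hy : 0 < y) : (2 : ℝ) ^ Int.log 2 y ≤ y :=
  mod_cast Int.zpow_log_le_self one_lt_two hy

lemma lt_two_zpow_log_add_one (y : ℝ) : y < (2 : ℝ) ^ (Int.log 2 y + 1) :=
  mod_cast Int.lt_zpow_succ_log_self one_lt_two y

lemma bump_div_zpow_of_log_lt {l : ℤ} (h : Int.log 2 y < l) : bump (y / 2 ^ l) = 0 := by
  refine bump_of_le_one (div_le_one_of_le₀ ?_ (by positivity))
  exact (lt_two_zpow_log_add_one y).le.trans (zpow_le_zpow_right₀ one_le_two h)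

lemma bump_div_zpow_of_lt_log_sub_one (hy : 0 < y) {l : ℤ} (h : l < Int.log 2 y - 1) :
    bump (y / 2 ^ l) = 0 := by
  refine bump_of_four_le ((le_div_iff₀ (by positivity)).2 ?_)
  calc (4 : ℝ) * 2 ^ l = 2 ^ (2 + l) := by rw [zpow_add₀ two_ne_zero]; norm_num
    _ ≤ 2 ^ Int.log 2 y := zpow_le_zpow_right₀ one_le_two (by omega)
    _ ≤ y := two_zpow_log_le hy

lemma bump_div_zpow_log_add (hy : 0 < y) :
    bump (y / 2 ^ Int.log 2 y) + bump (y / 2 ^ (Int.log 2 y - 1)) = 1 := by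
  have htwo : y / 2 ^ (Int.log 2 y - 1) = 2 * (y / 2 ^ Int.log 2 y) := by
    rw [zpow_sub_one₀ two_ne_zero]
    field_simp
  rw [htwo]
  refine bump_add_bump_two_mul ((one_le_div₀ (by positivity)).2 (two_zpow_log_le hy))
    ((div_le_iff₀ (by positivity)).2 ?_)
  rw [← zpow_one_add₀ two_ne_zero, add_comm]
  exact (lt_two_zpow_log_add_one y).le

lemma sum_bump_div_zpow (hy : 0 < y) {L : Finset ℤ} (h₁ : Int.log 2 y ∈ L)
    (h₂ : Int.log 2 y - 1 ∈ L) : ∑ l ∈ L, bump (y / 2 ^ l) = 1 := by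
  rw [Finset.sum_eq_add (Int.log 2 y) (Int.log 2 y - 1) (by omega) (fun l _ hl => ?_)
    (absurd h₁) (absurd h₂), bump_div_zpow_log_add hy]
  rcases lt_or_ge (Int.log 2 y) l with h | h
  · exact bump_div_zpow_of_log_lt h
  · exact bump_div_zpow_of_lt_log_sub_one hy (by omega)

lemma eventually_nhdsGT_forall_lt_iff_le {V : Set ℝ} (hV : V.Finite) (x : ℝ) :
    ∀ᶠ b in 𝓝[>] x, ∀ v ∈ V, v < b ↔ v ≤ x := by
  refine hV.eventually_all.2 fun v _ => ?_
  rcases le_or_gt v x with hvx | hvx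
  · filter_upwards [self_mem_nhdsWithin] with b hb using iff_of_true (hvx.trans_lt hb) hvx
  · filter_upwards [nhdsWithin_le_nhds (Iio_mem_nhds hvx)] with b hb
      using iff_of_false (not_lt.2 (Set.mem_Iio.1 hb).le) hvx.not_ge

lemma exists_indicator_Iic_eq_sum_bump {ι : Type*} [Fintype ι] (e : ι → ℝ) {T : ℕ} (hT : 1 ≤ T)
    (x : ℝ) :
    ∃ (b : ℝ) (L : Finset ℤ), L.card ≤ 192 * (Fintype.card ι + 1) ^ 2 * T ∧
      ∀ v ∈ intComb e T, (Set.Iic x).indicator 1 v = ∑ l ∈ L, bump ((b - v) / 2 ^ l) := by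
  have hfin := (finite_intComb_and_ncard_le e T).1
  obtain ⟨b, hb⟩ := (eventually_nhdsGT_forall_lt_iff_le hfin x).exists
  set Y : Finset ℝ := (hfin.toFinset.image fun v => b - v).filter (0 < ·)
  set S : Finset ℤ := Y.image (Int.log 2)
  have hcard : S.card ≤ 96 * (Fintype.card ι + 1) ^ 2 * T := by
    rw [← Fintype.card_option]
    refine card_image_log_le hT (fun y hy => (Finset.mem_filter.1 hy).2)
      (e := fun o : Option ι => o.elim b e) fun y hy => ?_
    obtain ⟨v, hv, rfl⟩ := Finset.mem_image.1 (Finset.mem_filter.1 hy).1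
    exact sub_mem_intComb_elim hT b (hfin.mem_toFinset.1 hv)
  refine ⟨b, S ∪ S.image (· - 1), ?_, fun v hv => ?_⟩
  · have hunion := Finset.card_union_le S (S.image (· - 1))
    have himage : (S.image (· - 1)).card ≤ S.card := Finset.card_image_le
    linarith
  by_cases hvx : v ≤ x
  · have hpos : 0 < b - v := sub_pos.2 ((hb v hv).2 hvx)
    have hmem : Int.log 2 (b - v) ∈ S := Finset.mem_image_of_mem _ <| Finset.mem_filter.2
      ⟨Finset.mem_image_of_mem _ (hfin.mem_toFinset.2 hv), hpos⟩
    rw [Set.indicator_of_mem (Set.mem_Iic.2 hvx), Pi.one_apply, sum_bump_div_zpow hpos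
      (Finset.mem_union_left _ hmem)
      (Finset.mem_union_right _ (Finset.mem_image_of_mem (· - 1) hmem))]
  · have hnonpos : b - v ≤ 0 := sub_nonpos.2 (not_lt.1 (hvx ∘ (hb v hv).1))
    rw [Set.indicator_of_notMem (by simpa using hvx),
      Finset.sum_eq_zero fun l _ => bump_div_zpow_of_nonpos hnonpos l]

variable {d : ℕ}

lemma indicator_orthant_eq_prod (x v : Euc d) :
    (orthant x).indicator (1 : Euc d → ℝ) v = ∏ i, (Set.Iic (x i)).indicator 1 (v i) := by
  classical
  by_cases hv : v ∈ orthant x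
  · rw [Set.indicator_of_mem hv, Finset.prod_eq_one fun i _ =>
      Set.indicator_of_mem (Set.mem_Iic.2 (hv i)) 1, Pi.one_apply]
  · obtain ⟨i, hi⟩ := not_forall.1 hv
    rw [Set.indicator_of_notMem hv,
      Finset.prod_eq_zero (Finset.mem_univ i) (Set.indicator_of_notMem (mt Set.mem_Iic.1 hi) 1)]

lemma integrable_prod_bump (μ : Measure (Euc d)) [IsFiniteMeasure μ] (b s : Fin d → ℝ) :
    Integrable (fun v : Euc d => ∏ i, bump ((b i - v i) / s i)) μ := by
  have := contDiff_bump.continuous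
  refine .of_bound (by fun_prop : Continuous _).aestronglyMeasurable 1 (.of_forall fun v => ?_)
  rw [norm_prod]
  exact Finset.prod_le_one (fun i _ => norm_nonneg _) fun i _ => abs_bump_le_one _

lemma exists_measureReal_orthant_eq_sum_integral_bump {ι : Type*} [Fintype ι] (ω : ι → Euc d)
    {T : ℕ} (hT : 1 ≤ T) (x : Euc d) :
    ∃ (b : Fin d → ℝ) (L : Finset (Fin d → ℤ)),
      L.card ≤ (192 * (Fintype.card ι + 1) ^ 2 * T) ^ d ∧
      ∀ μ : Measure (Euc d), IsFiniteMeasure μ → (∀ᵐ v ∂μ, v ∈ intComb ω T) →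
        μ.real (orthant x) = ∑ l ∈ L, ∫ v, ∏ i, bump ((b i - v i) / 2 ^ l i) ∂μ := by
  choose b L hcard hL using fun i =>
    exists_indicator_Iic_eq_sum_bump (fun j => ω j i) hT (x i)
  refine ⟨b, Fintype.piFinset L, ?_, fun μ _ hμ => ?_⟩
  · rw [Fintype.card_piFinset]
    exact (Finset.prod_le_pow_card _ _ _ fun i _ => hcard i).trans_eq (by simp)
  rw [← integral_indicator_one (measurableSet_orthant x),
    ← integral_finsetSum _ fun l _ => integrable_prod_bump μ b _]
  refine integral_congr_ae (hμ.mono fun v hv => ?_)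
  have hcoord : ∀ i, v i ∈ intComb (fun j => ω j i) T := fun i =>
    map_mem_intComb ((EuclideanSpace.proj i : Euc d →L[ℝ] ℝ) : Euc d →+ ℝ) hv
  simp only [indicator_orthant_eq_prod, hL _ _ (hcoord _), Finset.prod_univ_sum]

end Bump

section Fourier

lemma pow_mul_one_sub_pow_le {q : ℝ} (h₀ : 0 ≤ q) (h₁ : q ≤ 1) {m : ℕ} (hm : 0 < m) (r : ℕ) :
    q ^ m * (1 - q) ^ r ≤ r.factorial / (m : ℝ) ^ r := by
  have : 0 ≤ 1 - q := sub_nonneg.2 h₁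
  have hpow : q ^ m ≤ Real.exp (-(m * (1 - q))) := calc
    q ^ m ≤ Real.exp (-(1 - q)) ^ m := by
      gcongr
      linarith [Real.add_one_le_exp (-(1 - q))]
    _ = Real.exp (-(m * (1 - q))) := by rw [← Real.exp_nat_mul, mul_neg]
  have hexp : (m * (1 - q)) ^ r ≤ r.factorial * Real.exp (m * (1 - q)) :=
    (div_le_iff₀' (by positivity)).1 (Real.pow_div_factorial_le_exp _ (by positivity) r)
  rw [le_div_iff₀ (by positivity)]
  calc q ^ m * (1 - q) ^ r * m ^ r = q ^ m * (m * (1 - q)) ^ r := by rw [mul_pow]; ring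
    _ ≤ Real.exp (-(m * (1 - q))) * (r.factorial * Real.exp (m * (1 - q))) := by gcongr
    _ = r.factorial := by rw [mul_left_comm, ← Real.exp_add, neg_add_cancel, Real.exp_zero, mul_one]

variable {E : Type*} [NormedAddCommGroup E] [InnerProductSpace ℝ E] [MeasurableSpace E]
  [BorelSpace E]

lemma charFun_eq_ofReal_re (F : Measure E) [F.IsNegInvariant] (t : E) :
    charFun F t = ((charFun F t).re : ℂ) := by
  refine (Complex.conj_eq_iff_re.1 ?_).symm
  rw [← charFun_neg, charFun_apply, charFun_apply, ← integral_neg_eq_self]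
  simp

variable [SecondCountableTopology E] (F : Measure E) [IsProbabilityMeasure F] [F.IsNegInvariant]

lemma norm_fwdDiff_iter_charFun_convPow_le {m : ℕ} (hm : 0 < m) (r : ℕ) (t : E) :
    ‖Δ_[2] ^[r] (fun n => charFun (convPow F n) t) (2 * m)‖ ≤ r.factorial / (m : ℝ) ^ r := by
  set q : ℝ := (charFun F t).re
  have hq : charFun F t = q := charFun_eq_ofReal_re F t
  have hq1 : q ^ 2 ≤ 1 := by
    rw [sq_le_one_iff_abs_le_one, ← Real.norm_eq_abs, ← Complex.norm_real, ← hq]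
    exact norm_charFun_le_one t
  simp only [charFun_convPow, hq, fwdDiff_iter_pow]
  calc ‖((q : ℂ) ^ 2 - 1) ^ r * (q : ℂ) ^ (2 * m)‖ = (q ^ 2) ^ m * (1 - q ^ 2) ^ r := by
        rw [norm_mul, norm_pow, norm_sub_rev, norm_pow, Complex.norm_real, Real.norm_eq_abs,
          pow_mul, sq_abs, mul_comm]
        congr 2
        rw [← Real.norm_of_nonneg (sub_nonneg.2 hq1), ← Complex.norm_real]
        push_cast
        rfl
    _ ≤ r.factorial / (m : ℝ) ^ r := pow_mul_one_sub_pow_le (sq_nonneg q) hq1 hm r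

section Superposition

variable {V : Type*} [MeasurableSpace V] {ν : Measure V} {K : V → ℂ} {w : V → E} {φ : E → ℂ}

lemma integrable_mul_charFun (hK : Integrable K ν) (hw : Measurable w) (μ : Measure E)
    [IsProbabilityMeasure μ] : Integrable (fun v => K v * charFun μ (w v)) ν :=
  hK.mul_bdd (c := 1) (measurable_charFun.comp hw).aestronglyMeasurable
    (.of_forall fun v => norm_charFun_le_one (w v))

lemma integral_eq_integral_mul_charFun [SFinite ν] (hK : Integrable K ν) (hw : Measurable w)
    (hφ : ∀ x, φ x = ∫ v, K v * Complex.exp ((⟪x, w v⟫ : ℝ) * Complex.I) ∂ν) (μ : Measure E)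
    [IsProbabilityMeasure μ] : ∫ x, φ x ∂μ = ∫ v, K v * charFun μ (w v) ∂ν := by
  simp only [hφ, charFun_apply, ← integral_const_mul]
  refine integral_integral_swap ((hK.comp_snd μ).mul_bdd (c := 1) ?_ ?_)
  · exact (by fun_prop : Measurable _).aestronglyMeasurable
  · exact .of_forall fun _ => (Complex.norm_exp_ofReal_mul_I _).le

lemma norm_fwdDiff_iter_integral_convPow_le [SFinite ν] (hK : Integrable K ν) (hw : Measurable w)
    (hφ : ∀ x, φ x = ∫ v, K v * Complex.exp ((⟪x, w v⟫ : ℝ) * Complex.I) ∂ν)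
    {m : ℕ} (hm : 0 < m) (r : ℕ) :
    ‖Δ_[2] ^[r] (fun n => ∫ x, φ x ∂(convPow F n)) (2 * m)‖ ≤
      (∫ v, ‖K v‖ ∂ν) * (r.factorial / (m : ℝ) ^ r) := by
  simp only [integral_eq_integral_mul_charFun hK hw hφ]
  rw [fwdDiff_iter_integral fun n => integrable_mul_charFun hK hw (convPow F n),
    ← integral_mul_const]
  refine norm_integral_le_of_norm_le (hK.norm.mul_const _) (.of_forall fun v => ?_)
  have hsmul := fwdDiff_iter_const_smul 2 (K v) (fun n => charFun (convPow F n) (w v)) r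
  refine (congrArg norm (congrFun hsmul (2 * m))).trans_le ?_
  rw [Pi.smul_apply, norm_smul]
  gcongr
  exact norm_fwdDiff_iter_charFun_convPow_le F hm r (w v)

end Superposition

section Schwartz

lemma schwartz_eq_integral (g : SchwartzMap ℝ ℂ) (y : ℝ) :
    g y = ∫ v, Complex.exp ((2 * Real.pi * (v * y) : ℝ) * Complex.I) * 𝓕 g v := by
  have hinv := congrArg (fun f : SchwartzMap ℝ ℂ => f y)
    (FourierTransform.fourierInv_fourier_eq (F := SchwartzMap ℝ ℂ) g)
  rw [SchwartzMap.fourierInv_coe, Real.fourierInv_eq'] at hinv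
  rw [← hinv]
  simp [mul_comm]

variable {d : ℕ} (g : SchwartzMap ℝ ℂ) (b s : Fin d → ℝ)

/-- The Fourier transform, up to the rescaling of the frequencies made explicit in
`prod_schwartz_eq_integral`, of the function `x ↦ ∏ i, g ((b i - x i) / s i)` on `ℝ^d`. -/
def prodAmplitude (v : Fin d → ℝ) : ℂ :=
  ∏ i, Complex.exp ((2 * Real.pi * (v i * (b i / s i)) : ℝ) * Complex.I) * 𝓕 g (v i)

lemma integrable_prodAmplitude : Integrable (prodAmplitude g b s) := by
  refine Integrable.fintype_prod (μ := fun _ : Fin d => (volume : Measure ℝ)) (f := fun i v =>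
    Complex.exp ((2 * Real.pi * (v * (b i / s i)) : ℝ) * Complex.I) * 𝓕 g v) fun i => ?_
  refine (SchwartzMap.integrable (𝓕 g)).bdd_mul (c := 1) ?_ ?_
  · exact (by fun_prop : Continuous _).aestronglyMeasurable
  · exact .of_forall fun v => (Complex.norm_exp_ofReal_mul_I _).le

lemma integral_norm_prodAmplitude : ∫ v, ‖prodAmplitude g b s v‖ = (∫ v, ‖𝓕 g v‖) ^ d := by
  simp only [prodAmplitude, norm_prod, norm_mul, Complex.norm_exp_ofReal_mul_I, one_mul]
  rw [integral_fintype_prod_volume_eq_prod (f := fun (_ : Fin d) v => ‖𝓕 g v‖)]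
  simp

lemma prod_schwartz_eq_integral (x : Euc d) :
    ∏ i, g ((b i - x i) / s i) = ∫ v, prodAmplitude g b s v *
      Complex.exp ((⟪x, WithLp.toLp 2 fun i => -(2 * Real.pi * v i / s i)⟫ : ℝ) * Complex.I) := by
  simp only [schwartz_eq_integral g (_ / _)]
  rw [← integral_fintype_prod_volume_eq_prod (f := fun i v =>
    Complex.exp ((2 * Real.pi * (v * ((b i - x i) / s i)) : ℝ) * Complex.I) * 𝓕 g v)]
  refine integral_congr_ae (.of_forall fun v => ?_)
  simp only [PiLp.inner_apply, prodAmplitude, Complex.ofReal_sum, Finset.sum_mul, Complex.exp_sum,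
    ← Finset.prod_mul_distrib]
  refine Finset.prod_congr rfl fun i _ => ?_
  rw [mul_right_comm (Complex.exp _) (𝓕 g (v i)), ← Complex.exp_add, ← add_mul,
    ← Complex.ofReal_add]
  congr 4
  simp only [RCLike.inner_apply, Real.ringHom_apply]
  ring

lemma norm_fwdDiff_iter_integral_prod_schwartz_le (F : Measure (Euc d)) [IsProbabilityMeasure F]
    [F.IsNegInvariant] {m : ℕ} (hm : 0 < m) (r : ℕ) :
    ‖Δ_[2] ^[r] (fun n => ∫ x, ∏ i, g ((b i - x i) / s i) ∂(convPow F n)) (2 * m)‖ ≤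
      (∫ v, ‖𝓕 g v‖) ^ d * (r.factorial / (m : ℝ) ^ r) := by
  rw [← integral_norm_prodAmplitude g b s]
  exact norm_fwdDiff_iter_integral_convPow_le F (integrable_prodAmplitude g b s) (by fun_prop)
    (prod_schwartz_eq_integral g b s) hm r

end Schwartz

end Fourier

section SmoothDifference

variable {d : ℕ}

lemma hasCompactSupport_ofReal_bump : HasCompactSupport fun y => (bump y : ℂ) := by
  refine .intro (isCompact_Icc (a := 1) (b := 4)) fun y hy => ?_
  rcases not_and_or.1 hy with h | h
  · rw [bump_of_le_one (not_le.1 h).le, Complex.ofReal_zero]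
  · rw [bump_of_four_le (not_le.1 h).le, Complex.ofReal_zero]

/-- `bump` as a complex-valued Schwartz function, so that its Fourier transform is integrable. -/
def bumpSchwartz : SchwartzMap ℝ ℂ :=
  hasCompactSupport_ofReal_bump.toSchwartzMap (Complex.ofRealCLM.contDiff.comp contDiff_bump)

lemma abs_fwdDiff_iter_integral_prod_bump_le (F : Measure (Euc d)) [IsProbabilityMeasure F]
    [F.IsNegInvariant] {m : ℕ} (hm : 0 < m) (r : ℕ) (b s : Fin d → ℝ) :
    |Δ_[2] ^[r] (fun n => ∫ v, ∏ i, bump ((b i - v i) / s i) ∂(convPow F n)) (2 * m)| ≤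
      (∫ v, ‖𝓕 bumpSchwartz v‖) ^ d * (r.factorial / (m : ℝ) ^ r) := by
  rw [← Real.norm_eq_abs, ← Complex.norm_real]
  refine (congrArg norm ?_).trans_le
    (norm_fwdDiff_iter_integral_prod_schwartz_le bumpSchwartz b s F hm r)
  refine (map_fwdDiff_iter Complex.ofRealHom.toAddMonoidHom 2 _ r (2 * m)).trans ?_
  refine congrArg (fun f : ℕ → ℂ => Δ_[2] ^[r] f (2 * m)) (funext fun n => ?_)
  refine integral_complex_ofReal.symm.trans ?_
  simp only [Complex.ofReal_prod]
  rfl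

lemma abs_fwdDiff_iter_convPow_orthant_le_of_intComb {ι : Type*} [Fintype ι] (ω : ι → Euc d)
    (F : Measure (Euc d)) [IsProbabilityMeasure F] [F.IsNegInvariant]
    (hF : ∀ t, ∀ᵐ v ∂(convPow F t), v ∈ intComb ω t) {m : ℕ} (hm : 0 < m) (r : ℕ) (x : Euc d) :
    |Δ_[2] ^[r] (fun t => (convPow F t).real (orthant x)) (2 * m)| ≤
      (192 * (Fintype.card ι + 1) ^ 2 * (2 * m + 2 * r)) ^ d *
        ((∫ v, ‖𝓕 bumpSchwartz v‖) ^ d * (r.factorial / (m : ℝ) ^ r)) := by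
  obtain ⟨b, L, hcard, hL⟩ :=
    exists_measureReal_orthant_eq_sum_integral_bump ω (T := 2 * m + 2 * r) (by omega) x
  set κ : ℝ := (∫ v, ‖𝓕 bumpSchwartz v‖) ^ d * (r.factorial / (m : ℝ) ^ r)
  set f : (Fin d → ℤ) → ℕ → ℝ := fun l t => ∫ v, ∏ i, bump ((b i - v i) / 2 ^ l i) ∂(convPow F t)
  have hsum : ∀ j ≤ r, (convPow F (2 * m + j • 2)).real (orthant x) =
      (∑ l ∈ L, f l) (2 * m + j • 2) := fun j hj => by
    rw [Finset.sum_apply]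
    refine hL _ inferInstance ((hF _).mono fun v hv => intComb_mono ?_ hv)
    rw [smul_eq_mul]
    omega
  rw [fwdDiff_iter_congr r hsum, fwdDiff_iter_finsetSum, Finset.sum_apply]
  calc |∑ l ∈ L, Δ_[2] ^[r] (f l) (2 * m)| ≤ ∑ l ∈ L, |Δ_[2] ^[r] (f l) (2 * m)| :=
        Finset.abs_sum_le_sum_abs _ _
    _ ≤ L.card • κ := Finset.sum_le_card_nsmul _ _ _ fun l _ =>
        abs_fwdDiff_iter_integral_prod_bump_le F hm r b _
    _ ≤ (192 * (Fintype.card ι + 1) ^ 2 * (2 * m + 2 * r)) ^ d * κ := by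
        rw [nsmul_eq_mul]
        gcongr
        exact_mod_cast hcard

lemma abs_fwdDiff_iter_convPow_orthant_le_add (F : Measure (Euc d)) [IsProbabilityMeasure F]
    [F.IsNegInvariant] {N : ℕ} (hN : 0 < N) {m : ℕ} (hm : 0 < m) (r : ℕ) (x : Euc d) :
    |Δ_[2] ^[r] (fun t => (convPow F t).real (orthant x)) (2 * m)| ≤
      (192 * (N + 1) ^ 2 * (2 * m + 2 * r)) ^ d *
          ((∫ v, ‖𝓕 bumpSchwartz v‖) ^ d * (r.factorial / (m : ℝ) ^ r)) +
        2 ^ r * ((2 * m + 2 * r) ^ 2 / N) := by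
  have : Nonempty (Fin N) := Fin.pos_iff_nonempty.1 hN
  have hx := measurableSet_orthant x
  set P := Measure.pi fun _ : Fin N => F
  set u : ℕ → ℝ := fun t => (convPow F t).real (orthant x)
  set v : (Fin N → Euc d) → ℕ → ℝ := fun ω t => (convPow (symmEmpirical ω) t).real (orthant x)
  set w : ℕ → ℝ := fun t => ∫ ω, v ω t ∂P
  have hv : ∀ t, Integrable (fun ω => v ω t) P := fun t =>
    integrable_measureReal_convPow_symmEmpirical F t hx
  have hmain : ‖Δ_[2] ^[r] w (2 * m)‖ ≤ (192 * (N + 1) ^ 2 * (2 * m + 2 * r)) ^ d *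
      ((∫ v, ‖𝓕 bumpSchwartz v‖) ^ d * (r.factorial / (m : ℝ) ^ r)) := by
    refine norm_fwdDiff_iter_integral_le hv fun ω => ?_
    exact (abs_fwdDiff_iter_convPow_orthant_le_of_intComb ω (symmEmpirical ω)
      (ae_mem_intComb_convPow_symmEmpirical ω) hm r x).trans_eq (by rw [Fintype.card_fin])
  have hsampling : ‖Δ_[2] ^[r] (u - w) (2 * m)‖ ≤ 2 ^ r * ((2 * m + 2 * r) ^ 2 / N) := by
    refine norm_fwdDiff_iter_le r fun j hj => ?_
    rw [Pi.sub_apply, norm_sub_rev]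
    refine (abs_integral_convPow_symmEmpirical_sub_le F _ hx).trans ?_
    rw [Fintype.card_fin, smul_eq_mul, mul_comm j]
    push_cast
    gcongr
  calc ‖Δ_[2] ^[r] u (2 * m)‖ = ‖Δ_[2] ^[r] w (2 * m) + Δ_[2] ^[r] (u - w) (2 * m)‖ := by
        rw [← Pi.add_apply, ← fwdDiff_iter_add, add_sub_cancel]
    _ ≤ _ := norm_add_le_of_le hmain hsampling

end SmoothDifference

section Rescaling

variable {d : ℕ}

-- A sample of `m ^ 4` points leaves `O(m ^ 9)` scales per coordinate; the order `9 * d + 2` of the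
-- difference outweighs the resulting `O(m ^ (9 * d))` terms by the factor `m ^ 2`.
lemma exists_abs_fwdDiff_iter_convPow_orthant_le_div_sq_of_pos (d : ℕ) : ∃ C : ℝ, 0 ≤ C ∧
    ∀ (F : Measure (Euc d)) [IsProbabilityMeasure F] [F.IsNegInvariant] {m : ℕ}, 0 < m →
      ∀ x, |Δ_[2] ^[9 * d + 2] (fun t => (convPow F t).real (orthant x)) (2 * m)| ≤
        C / (m : ℝ) ^ 2 := by
  set r := 9 * d + 2 with hr
  set A : ℝ := (∫ v, ‖𝓕 bumpSchwartz v‖) ^ d * r.factorial with hA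
  refine ⟨(1536 * (1 + r)) ^ d * A + 2 ^ r * (2 * (1 + r)) ^ 2, by positivity,
    fun F _ _ m hm x => ?_⟩
  have hm1 : (1 : ℝ) ≤ m := Nat.one_le_cast.2 hm
  have hm0 : (m : ℝ) ≠ 0 := (zero_lt_one.trans_le hm1).ne'
  have htime : 2 * (m : ℝ) + 2 * r ≤ 2 * (1 + r) * m := by
    linarith [le_mul_of_one_le_right r.cast_nonneg hm1]
  have hscales : 192 * ((m : ℝ) ^ 4 + 1) ^ 2 * (2 * m + 2 * r) ≤ 1536 * (1 + r) * m ^ 9 :=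
    calc _ ≤ 192 * ((m : ℝ) ^ 4 + m ^ 4) ^ 2 * (2 * (1 + r) * m) := by
          gcongr
          exact one_le_pow₀ hm1
      _ = 1536 * (1 + r) * m ^ 9 := by ring
  have hfourier : (192 * ((m : ℝ) ^ 4 + 1) ^ 2 * (2 * m + 2 * r)) ^ d *
      ((∫ v, ‖𝓕 bumpSchwartz v‖) ^ d * (r.factorial / (m : ℝ) ^ r)) ≤
        (1536 * (1 + r)) ^ d * A / m ^ 2 :=
    calc _ ≤ (1536 * (1 + r) * (m : ℝ) ^ 9) ^ d * (A / m ^ r) := by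
          rw [hA, mul_div_assoc]
          gcongr
      _ = _ := by
          rw [hr, mul_pow, ← pow_mul, pow_add]
          field_simp
  have hsampling : 2 ^ r * ((2 * (m : ℝ) + 2 * r) ^ 2 / m ^ 4) ≤
      2 ^ r * (2 * (1 + r)) ^ 2 / m ^ 2 :=
    calc _ ≤ 2 ^ r * ((2 * (1 + r) * (m : ℝ)) ^ 2 / m ^ 4) := by gcongr
      _ = _ := by field_simp
  have hbound := abs_fwdDiff_iter_convPow_orthant_le_add F (pow_pos hm 4) hm r x
  rw [Nat.cast_pow] at hbound
  rw [add_div]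
  exact hbound.trans (add_le_add hfourier hsampling)

lemma exists_abs_fwdDiff_iter_convPow_orthant_le_div_sq (d : ℕ) : ∃ C : ℝ, 0 ≤ C ∧
    ∀ (F : Measure (Euc d)) [IsProbabilityMeasure F] [F.IsNegInvariant] (m : ℕ) (x : Euc d),
      |Δ_[2] ^[9 * d + 2] (fun t => (convPow F t).real (orthant x)) (2 * m)| ≤
        C / (m + 1 : ℝ) ^ 2 := by
  obtain ⟨C, hC, hpos⟩ := exists_abs_fwdDiff_iter_convPow_orthant_le_div_sq_of_pos d
  refine ⟨2 ^ (9 * d + 2) + 4 * C, by positivity, fun F _ _ m x => ?_⟩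
  rcases m.eq_zero_or_pos with rfl | hm
  · have htrivial := norm_fwdDiff_iter_le (f := fun t => (convPow F t).real (orthant x))
      (h := 2) (t := 2 * 0) (9 * d + 2) fun _ _ => norm_measureReal_le_one _ _
    refine htrivial.trans ?_
    simpa using hC
  · have hm1 : (1 : ℝ) ≤ m := Nat.one_le_cast.2 hm
    calc _ ≤ C / (m : ℝ) ^ 2 := hpos F hm x
      _ = 4 * C / (m + m) ^ 2 := by field_simp; ring
      _ ≤ (2 ^ (9 * d + 2) + 4 * C) / (m + 1) ^ 2 := by
          gcongr
          exact le_add_of_nonneg_left (by positivity)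

lemma abs_fwdDiff_iter_convPow_orthant_le_of_convPow (F : Measure (Euc d)) [IsProbabilityMeasure F]
    {s h r t : ℕ} {B : ℝ}
    (hB : ∀ x, |Δ_[h] ^[r] (fun t => (convPow (convPow F s) t).real (orthant x)) t| ≤ B)
    (e : ℕ) (x : Euc d) :
    |Δ_[s * h] ^[r] (fun t => (convPow F t).real (orthant x)) (e + s * t)| ≤ B := by
  have hconv (j : ℕ) : (convPow F (e + s * j)).real (orthant x) =
      ∫ a, (convPow (convPow F s) j).real (orthant (x - a)) ∂(convPow F e) := by
    rw [convPow_add, convPow_mul, measureReal_conv _ _ (measurableSet_orthant x)]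
    simp only [preimage_add_orthant]
  have hint (j : ℕ) : Integrable (fun a => (convPow (convPow F s) j).real (orthant (x - a)))
      (convPow F e) := by
    simpa only [Set.preimage_preimage, preimage_add_orthant] using integrable_measureReal_prodMk
      (convPow F e) (convPow (convPow F s) j) (measurable_add (measurableSet_orthant x))
  rw [← fwdDiff_iter_comp (φ := fun j => e + s * j) (h := h) (fun j => by ring)]
  simp only [hconv]
  exact norm_fwdDiff_iter_integral_le hint fun a => hB (x - a)

lemma exists_abs_fwdDiff_iter_convPow_orthant_le_rpow (d : ℕ) : ∃ C : ℝ, 0 ≤ C ∧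
    ∀ (F : Measure (Euc d)) [IsProbabilityMeasure F] [F.IsNegInvariant] {n s t : ℕ},
      0 < n → 0 < s → n ≤ t → ∀ x,
        |Δ_[s * 2] ^[9 * d + 2] (fun t => (convPow F t).real (orthant x)) t| ≤
          C * (s / n : ℝ) ^ (3 / 2 : ℝ) := by
  obtain ⟨C, hC, hsq⟩ := exists_abs_fwdDiff_iter_convPow_orthant_le_div_sq d
  refine ⟨C * 2 ^ (3 / 2 : ℝ), by positivity, fun F _ _ n s t hn hs hnt x => ?_⟩
  set m := n / (s * 2)
  obtain ⟨e, rfl⟩ : ∃ e, t = e + s * (2 * m) :=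
    Nat.exists_eq_add_of_le' (mul_assoc s 2 m ▸ (Nat.mul_div_le n (s * 2)).trans hnt)
  have hm0 : (0 : ℝ) < m + 1 := by positivity
  have hm : ((m + 1 : ℝ))⁻¹ ≤ 2 * (s / n) := by
    have : n < s * 2 * (m + 1) := Nat.lt_mul_div_succ n (by positivity)
    rw [inv_le_iff_one_le_mul₀ hm0, ← mul_div_assoc, div_mul_eq_mul_div,
      one_le_div (Nat.cast_pos.2 hn), mul_comm (2 : ℝ)]
    exact_mod_cast this.le
  calc _ ≤ C / (m + 1 : ℝ) ^ 2 :=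
        abs_fwdDiff_iter_convPow_orthant_le_of_convPow F (hsq (convPow F s) m) e x
    _ = C * ((m + 1 : ℝ))⁻¹ ^ (2 : ℝ) := by rw [Real.rpow_two, inv_pow, div_eq_mul_inv]
    _ ≤ C * ((m + 1 : ℝ))⁻¹ ^ (3 / 2 : ℝ) := by
        gcongr C * ?_
        exact Real.rpow_le_rpow_of_exponent_ge (by positivity)
          (inv_le_one_of_one_le₀ (by simp)) (by norm_num)
    _ ≤ C * (2 * (s / n)) ^ (3 / 2 : ℝ) := by gcongr
    _ = C * 2 ^ (3 / 2 : ℝ) * (s / n : ℝ) ^ (3 / 2 : ℝ) := by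
        rw [Real.mul_rpow two_pos.le (by positivity), mul_assoc]

theorem exists_abs_convPow_orthant_sub_le_linear (d : ℕ) : ∃ C : ℝ, 0 ≤ C ∧
    ∀ (F : Measure (Euc d)) [IsProbabilityMeasure F] [F.IsNegInvariant] {n k : ℕ},
      0 < n → 0 < k → ∀ x, |(convPow F (n + 2 * k)).real (orthant x) -
        (convPow F n).real (orthant x)| ≤ C * (k / n) := by
  obtain ⟨C, hC, hrpow⟩ := exists_abs_fwdDiff_iter_convPow_orthant_le_rpow d
  obtain ⟨C', hC', hlinear⟩ := exists_norm_fwdDiff_le_linear (E := ℝ) (γ := 3 / 2) hC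
    (by norm_num) (by norm_num) (9 * d)
  refine ⟨C', hC', fun F _ _ n k hn hk x => ?_⟩
  have hdiff := hlinear n hn (fun j => (convPow F (n + j * 2)).real (orthant x))
    (fun _ => norm_measureReal_le_one _ _) (fun s hs t => ?_) k hk 0
  · simpa [fwdDiff, mul_comm k] using hdiff
  · rw [fwdDiff_iter_comp (φ := fun j => n + j * 2) (h' := s * 2) (fun j => by ring)
      (fun t => (convPow F t).real (orthant x))]
    exact hrpow F hn hs (Nat.le_add_right _ _) x

end Rescaling

end ConvolutionPower

end

theorem stmt6 :
    ∃ c : ℝ, 0 < c ∧ ∃ C : ℕ → ℝ, (∀ d, 0 < C d) ∧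
      ∀ (d k n : ℕ), 0 < d → 0 < k → 0 < n →
        ∀ F : Measure (Euc d), IsProbabilityMeasure F → IsSymmMeasure F →
          kolmDist (convPow F n) (convPow F (n + 2 * k + 1)) ≤
            c * d / Real.sqrt n + C d * k * (n : ℝ)⁻¹ := by
  choose C hC hlinear using ConvolutionPower.exists_abs_convPow_orthant_sub_le_linear
  refine ⟨1, one_pos, fun d => C d + 1, fun d => by linarith [hC d],
    fun d k n _ hk hn F _ hF => ciSup_le fun x => ?_⟩
  have : F.IsNegInvariant := ⟨hF⟩
  have : (0 : ℝ) < n := Nat.cast_pos.2 hn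
  set u : ℕ → ℝ := fun t => (convPow F t).real (ConvolutionPower.orthant x)
  calc |u n - u (n + 2 * k + 1)|
      ≤ |u (n + 2 * k + 1) - u (n + 2 * k)| + |u (n + 2 * k) - u n| := by
        rw [abs_sub_comm]
        exact abs_sub_le _ _ _
    _ ≤ d / √((n + 2 * k : ℕ) + 1) + C d * (k / n) :=
        add_le_add (ConvolutionPower.abs_convPow_succ_sub_le F (n + 2 * k) x) (hlinear d F hn hk x)
    _ ≤ 1 * d / √n + (C d + 1) * k * (n : ℝ)⁻¹ := by
        rw [one_mul, mul_assoc, ← div_eq_mul_inv]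
        gcongr
        · push_cast
          linarith [Nat.cast_nonneg (α := ℝ) k]
        · exact le_add_of_nonneg_right zero_le_one
end
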